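/- arXiv:1810.12232 — 2 statements merged into one kernel-verified Lean document; each statement's English description precedes it below -/
import Mathlib

section
/- There exist constants C > 0 and C₁ > 0, depending only on Ω, ω₀, ω and η⁰, such that for every T > 0, every bounded measurable potential a, every λ ≥ 1, every s ≥ C e^{4λM}(T + T² + T²‖a‖_∞^{1/2}), and every classical nonnegative solution q of the adjoint heat equation with Neumann boundary condition, one has ∫₀^T ∫_Ω e^{−sα(t,x)} ξ(t,x)² q(t,x) dx dt ≤ C₁ ∫₀^T ∫_ω e^{−sα(t,x)} ξ(t,x)² q(t,x) dx dt. -/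
open MeasureTheory Real Set RealInnerProductSpace

noncomputable def spaceLaplacian {N : ℕ} (f : EuclideanSpace ℝ (Fin N) → ℝ)
    (x : EuclideanSpace ℝ (Fin N)) : ℝ :=
  ∑ i : Fin N, fderiv ℝ (fun y => fderiv ℝ f y (EuclideanSpace.single i 1)) x
    (EuclideanSpace.single i 1)


lemma int_fderiv_zero {N : ℕ} (f : EuclideanSpace ℝ (Fin N) → ℝ) (hf : ContDiff ℝ 1 f)
    (hc : HasCompactSupport f) (v : EuclideanSpace ℝ (Fin N)) : ∫ x, fderiv ℝ f x v = 0 := by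
  have hd : Continuous (fun x => fderiv ℝ f x v) :=
    (hf.continuous_fderiv (by norm_num)).clm_apply continuous_const
  have hcs : HasCompactSupport (fun x => fderiv ℝ f x v) := hc.fderiv_apply (𝕜 := ℝ) v
  have := integral_mul_fderiv_eq_neg_fderiv_mul_of_integrable (μ := volume) (𝕜 := ℝ)
    (f := fun _ : EuclideanSpace ℝ (Fin N) => (1:ℝ)) (g := f) (v := v) (by simp)
    (by simpa using hd.integrable_of_hasCompactSupport hcs)
    (by simpa using hf.continuous.integrable_of_hasCompactSupport hc)
    (by fun_prop) (fun x _ => (hf.differentiable (by norm_num)) x)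
  simpa using this

lemma superlevel_compact {N : ℕ} {Ω : Set (EuclideanSpace ℝ (Fin N))}
    (hΩb : Bornology.IsBounded Ω) (f : EuclideanSpace ℝ (Fin N) → ℝ) (δ : ℝ)
    (hf : ContinuousOn f (closure Ω)) :
    IsCompact (closure Ω ∩ f ⁻¹' Ici δ) :=
  hΩb.isCompact_closure.of_isClosed_subset
    (hf.preimage_isClosed_of_isClosed isClosed_closure isClosed_Ici) inter_subset_left

lemma mem_of_closure {N : ℕ} {Ω : Set (EuclideanSpace ℝ (Fin N))}
    (hΩo : IsOpen Ω) {x : EuclideanSpace ℝ (Fin N)} (hx : x ∈ closure Ω) (h : x ∉ frontier Ω) :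
    x ∈ Ω := by
  by_contra h'
  exact h ⟨hx, by rwa [hΩo.interior_eq]⟩

lemma cutoff_int {N : ℕ} {Ω : Set (EuclideanSpace ℝ (Fin N))}
    (hΩo : IsOpen Ω) (hΩb : Bornology.IsBounded Ω)
    (η : EuclideanSpace ℝ (Fin N) → ℝ) (hη : ContDiff ℝ 2 η)
    (hηbd : ∀ x ∈ frontier Ω, η x = 0) (ε : ℝ) (hε : 0 < ε)
    (h : ℝ → ℝ) (hh : ContDiff ℝ 1 h) (hh0 : ∀ r ≤ ε, h r = 0)
    (V : EuclideanSpace ℝ (Fin N) → ℝ) (hV : ContDiffOn ℝ 1 V Ω) (v : EuclideanSpace ℝ (Fin N)) :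
    IntegrableOn (fun x => deriv h (η x) * fderiv ℝ η x v * V x + h (η x) * fderiv ℝ V x v) Ω ∧
    ∫ x in Ω, (deriv h (η x) * fderiv ℝ η x v * V x + h (η x) * fderiv ℝ V x v) = 0 := by
  set W : EuclideanSpace ℝ (Fin N) → ℝ := Ω.indicator (fun x => h (η x) * V x) with hW
  set K := closure Ω ∩ η ⁻¹' Ici ε with hK
  have hKc : IsCompact K := superlevel_compact hΩb η ε hη.continuous.continuousOn
  have hKΩ : K ⊆ Ω := fun x hx => mem_of_closure hΩo hx.1 (fun hf => by
    have := hηbd x hf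
    have h2 : ε ≤ η x := hx.2
    linarith)
  have hW0 : ∀ x ∉ K, W x = 0 := by
    intro x hx
    by_cases hxΩ : x ∈ Ω
    · have : η x ≤ ε := by
        by_contra hc
        exact hx ⟨subset_closure hxΩ, (not_le.1 hc).le⟩
      simp [hW, hh0 _ this]
    · simp [hW, hxΩ]
  have hWΩ : ∀ x ∈ Ω, W =ᶠ[nhds x] fun x => h (η x) * V x := by
    intro x hx
    filter_upwards [hΩo.mem_nhds hx] with y hy
    simp [hW, hy]
  have hη1 : ContDiff ℝ 1 η := hη.of_le (by norm_num)
  have hWd : ContDiff ℝ 1 W := by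
    rw [contDiff_iff_contDiffAt]
    intro x
    by_cases hx : x ∈ Ω
    · refine ContDiffAt.congr_of_eventuallyEq ?_ (hWΩ x hx)
      exact ((hh.comp hη1).contDiffAt).mul (hV.contDiffAt (hΩo.mem_nhds hx))
    · have : W =ᶠ[nhds x] fun _ => 0 := by
        filter_upwards [hKc.isClosed.isOpen_compl.mem_nhds (fun h => hx (hKΩ h))] with y hy
        exact hW0 y hy
      exact contDiffAt_const.congr_of_eventuallyEq this
  have hWc : HasCompactSupport W := HasCompactSupport.intro hKc hW0
  have h1 := int_fderiv_zero W hWd hWc v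
  have hfd : ∀ x ∈ Ω, fderiv ℝ W x v =
      deriv h (η x) * fderiv ℝ η x v * V x + h (η x) * fderiv ℝ V x v := by
    intro x hx
    rw [(hWΩ x hx).fderiv_eq]
    have e1 : HasFDerivAt (fun x => h (η x)) (deriv h (η x) • fderiv ℝ η x) x :=
      ((hh.differentiable (by norm_num)) (η x)).hasDerivAt.comp_hasFDerivAt x
        ((hη1.differentiable (by norm_num)) x).hasFDerivAt
    have e2 : HasFDerivAt V (fderiv ℝ V x) x :=
      ((hV.contDiffAt (hΩo.mem_nhds hx)).differentiableAt (by norm_num)).hasFDerivAt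
    have e3 : HasFDerivAt (fun x => h (η x) * V x) _ x := e1.mul e2
    rw [e3.fderiv]
    simp
    ring
  have hz : ∀ x ∉ Ω, fderiv ℝ W x v = 0 := by
    intro x hx
    have : W =ᶠ[nhds x] fun _ => 0 := by
      filter_upwards [hKc.isClosed.isOpen_compl.mem_nhds (fun h => hx (hKΩ h))] with y hy
      exact hW0 y hy
    rw [this.fderiv_eq]; simp
  have hd : Continuous (fun x => fderiv ℝ W x v) :=
    (hWd.continuous_fderiv (by norm_num)).clm_apply continuous_const
  have hcs : HasCompactSupport (fun x => fderiv ℝ W x v) := hWc.fderiv_apply (𝕜 := ℝ) v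
  constructor
  · exact ((hd.integrable_of_hasCompactSupport hcs).integrableOn (s := Ω)).congr_fun hfd
      hΩo.measurableSet
  · rw [← setIntegral_congr_fun hΩo.measurableSet hfd,
      setIntegral_eq_integral_of_forall_compl_eq_zero hz, h1]

lemma integrableOn_of_closure {N : ℕ} {Ω : Set (EuclideanSpace ℝ (Fin N))}
    (hΩb : Bornology.IsBounded Ω) {f : EuclideanSpace ℝ (Fin N) → ℝ}
    (hf : ContinuousOn f (closure Ω)) : IntegrableOn f Ω :=
  (hf.integrableOn_compact hΩb.isCompact_closure).mono_set subset_closure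

lemma cutoff_div {N : ℕ} {Ω : Set (EuclideanSpace ℝ (Fin N))}
    (hΩo : IsOpen Ω) (hΩb : Bornology.IsBounded Ω)
    (η : EuclideanSpace ℝ (Fin N) → ℝ) (hη : ContDiff ℝ 2 η)
    (hηbd : ∀ x ∈ frontier Ω, η x = 0) (ε : ℝ) (hε : 0 < ε)
    (h : ℝ → ℝ) (hh : ContDiff ℝ 1 h) (hh0 : ∀ r ≤ ε, h r = 0)
    (V : Fin N → EuclideanSpace ℝ (Fin N) → ℝ) (hV : ∀ i, ContDiffOn ℝ 1 (V i) Ω)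
    (hVc : ∀ i, ContinuousOn (V i) (closure Ω))
    (D : EuclideanSpace ℝ (Fin N) → ℝ) (hD : ContinuousOn D (closure Ω))
    (hDV : ∀ x ∈ Ω, ∑ i, fderiv ℝ (V i) x (EuclideanSpace.single i 1) = D x) :
    IntegrableOn (fun x => deriv h (η x) *
      ∑ i, V i x * fderiv ℝ η x (EuclideanSpace.single i 1)) Ω ∧
    ∫ x in Ω, h (η x) * D x = - ∫ x in Ω, deriv h (η x) *
      ∑ i, V i x * fderiv ℝ η x (EuclideanSpace.single i 1) := by
  have hdη : ∀ v, Continuous (fun x => fderiv ℝ η x v) := fun v =>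
    (hη.continuous_fderiv (by norm_num)).clm_apply continuous_const
  have hdh : Continuous (deriv h) := hh.continuous_deriv (by norm_num)
  have hηc := hη.continuous
  have i1 : IntegrableOn (fun x => deriv h (η x) *
      ∑ i, V i x * fderiv ℝ η x (EuclideanSpace.single i 1)) Ω := by
    apply integrableOn_of_closure hΩb
    refine (hdh.comp hηc).continuousOn.mul (continuousOn_finsetSum _ fun i _ => ?_)
    exact (hVc i).mul (hdη _).continuousOn
  have i2 : IntegrableOn (fun x => h (η x) * D x) Ω :=
    integrableOn_of_closure hΩb ((hh.continuous.comp hηc).continuousOn.mul hD)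
  refine ⟨i1, ?_⟩
  have key := fun i => cutoff_int hΩo hΩb η hη hηbd ε hε h hh hh0 (V i) (hV i)
    (EuclideanSpace.single i 1)
  have hs : ∫ x in Ω, ∑ i, (deriv h (η x) * fderiv ℝ η x (EuclideanSpace.single i 1) * V i x
      + h (η x) * fderiv ℝ (V i) x (EuclideanSpace.single i 1)) = 0 := by
    rw [integral_finsetSum _ (fun i _ => (key i).1)]
    exact Finset.sum_eq_zero fun i _ => (key i).2
  have : ∫ x in Ω, (h (η x) * D x + deriv h (η x) *
      ∑ i, V i x * fderiv ℝ η x (EuclideanSpace.single i 1)) = 0 := by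
    rw [← hs]
    apply setIntegral_congr_fun hΩo.measurableSet
    intro x hx
    simp only
    rw [← hDV x hx, Finset.sum_add_distrib, Finset.mul_sum, Finset.mul_sum, add_comm]
    congr 1
    exact Finset.sum_congr rfl fun i _ => by ring
  rw [integral_add i2 i1] at this
  linarith

lemma div_int_nonneg {N : ℕ} {Ω : Set (EuclideanSpace ℝ (Fin N))}
    (hΩo : IsOpen Ω) (hΩb : Bornology.IsBounded Ω)
    (η : EuclideanSpace ℝ (Fin N) → ℝ) (hη : ContDiff ℝ 2 η)
    (hηpos : ∀ x ∈ Ω, 0 < η x) (hηbd : ∀ x ∈ frontier Ω, η x = 0)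
    (c ε₁ : ℝ) (hc : 0 < c) (hε₁ : 0 < ε₁)
    (hgrad : ∀ x ∈ Ω, η x < ε₁ → c ≤ ∑ i, (fderiv ℝ η x (EuclideanSpace.single i 1)) ^ 2)
    (V : Fin N → EuclideanSpace ℝ (Fin N) → ℝ) (hV : ∀ i, ContDiffOn ℝ 1 (V i) Ω)
    (hVc : ∀ i, ContinuousOn (V i) (closure Ω))
    (hVb : ∀ x ∈ frontier Ω, ∑ i, V i x * fderiv ℝ η x (EuclideanSpace.single i 1) ≤ 0)
    (D : EuclideanSpace ℝ (Fin N) → ℝ) (hD : ContinuousOn D (closure Ω))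
    (hDV : ∀ x ∈ Ω, ∑ i, fderiv ℝ (V i) x (EuclideanSpace.single i 1) = D x) :
    0 ≤ ∫ x in Ω, D x := by
  have hdη : ∀ v, ContDiff ℝ 1 (fun x => fderiv ℝ η x v) := fun v =>
    (hη.fderiv_right (m := 1) (by norm_num)).clm_apply contDiff_const
  have hηc := hη.continuous
  have hfin : volume Ω < ⊤ := hΩb.measure_lt_top
  set S : EuclideanSpace ℝ (Fin N) → ℝ :=
    fun x => ∑ i, V i x * fderiv ℝ η x (EuclideanSpace.single i 1) with hS
  have hSc : ContinuousOn S (closure Ω) := by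
    refine continuousOn_finsetSum _ fun i _ => ?_
    exact (hVc i).mul (hdη _).continuous.continuousOn
  set Lη : EuclideanSpace ℝ (Fin N) → ℝ := fun x =>
    ∑ i, fderiv ℝ (fun y => fderiv ℝ η y (EuclideanSpace.single i 1)) x
      (EuclideanSpace.single i 1) with hLη
  have hLc : Continuous Lη := by
    refine continuous_finsetSum _ fun i _ => ?_
    exact ((hdη _).continuous_fderiv (by norm_num)).clm_apply continuous_const
  obtain ⟨L, hL⟩ := hΩb.isCompact_closure.exists_bound_of_continuousOn hLc.continuousOn
  set B := |L| * (volume Ω).toReal with hB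
  have hB0 : 0 ≤ B := by positivity
  let h : ℝ → ℝ → ℝ := fun ε r => Real.smoothTransition (r / ε - 1)
  have hh : ∀ ε, ContDiff ℝ 1 (h ε) := fun ε =>
    (Real.smoothTransition.contDiff (n := 1)).comp
      ((contDiff_id.div_const ε).sub contDiff_const)
  have hh0 : ∀ ε > 0, ∀ r ≤ ε, h ε r = 0 := by
    intro ε hε r hr
    apply Real.smoothTransition.zero_of_nonpos
    have : r / ε ≤ 1 := (div_le_one hε).2 hr
    linarith
  have hh1 : ∀ ε > 0, ∀ r, 2 * ε ≤ r → h ε r = 1 := by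
    intro ε hε r hr
    apply Real.smoothTransition.one_of_one_le
    have : 2 ≤ r / ε := (le_div_iff₀ hε).2 hr
    linarith
  have hd0 : ∀ ε > 0, ∀ r, 0 ≤ deriv (h ε) r := by
    intro ε hε r
    apply Monotone.deriv_nonneg
    intro a b hab
    apply Real.smoothTransition.monotone
    gcongr
  have hd1 : ∀ ε > 0, ∀ r, 2 * ε < r → deriv (h ε) r = 0 := by
    intro ε hε r hr
    have : h ε =ᶠ[nhds r] fun _ => 1 := by
      filter_upwards [lt_mem_nhds hr] with y hy using hh1 ε hε y hy.le
    rw [this.deriv_eq]; simp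
  have hint : ∀ ε, IntegrableOn (fun x => deriv (h ε) (η x)) Ω := fun ε =>
    integrableOn_of_closure hΩb
      (((hh ε).continuous_deriv (by norm_num)).comp hηc).continuousOn
  have hbound : ∀ ε > 0, 2 * ε < ε₁ → ∫ x in Ω, deriv (h ε) (η x) ≤ B / c := by
    intro ε hε hε2
    obtain ⟨j1, j2⟩ := cutoff_div hΩo hΩb η hη hηbd ε hε (h ε) (hh ε) (hh0 ε hε)
      (fun i x => fderiv ℝ η x (EuclideanSpace.single i 1)) (fun i => (hdη _).contDiffOn)
      (fun i => (hdη _).continuous.continuousOn) Lη hLc.continuousOn (fun x _ => rfl)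
    have k1 : ∫ x in Ω, c * deriv (h ε) (η x) ≤ ∫ x in Ω, deriv (h ε) (η x) *
      ∑ i, fderiv ℝ η x (EuclideanSpace.single i 1) *
        fderiv ℝ η x (EuclideanSpace.single i 1) := by
      refine setIntegral_mono_on ((hint ε).const_mul c) j1 hΩo.measurableSet ?_
      intro x hx
      by_cases hx2 : 2 * ε < η x
      · rw [hd1 ε hε _ hx2]; simp
      · rw [mul_comm]
        refine mul_le_mul_of_nonneg_left ?_ (hd0 ε hε _)
        have := hgrad x hx (by linarith)
        simpa [pow_two] using this
    have k2 : ‖∫ x in Ω, h ε (η x) * Lη x‖ ≤ |L| * (volume.real Ω) := by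
      refine norm_setIntegral_le_of_norm_le_const hfin ?_
      intro x hx
      rw [norm_mul]
      have a1 : ‖h ε (η x)‖ ≤ 1 := by
        rw [Real.norm_of_nonneg (Real.smoothTransition.nonneg _)]
        exact Real.smoothTransition.le_one _
      have a2 : ‖Lη x‖ ≤ |L| := (hL x (subset_closure hx)).trans (le_abs_self _)
      calc _ ≤ 1 * |L| := by gcongr
        _ = |L| := one_mul _
    rw [integral_const_mul] at k1
    rw [le_div_iff₀ hc]
    rw [Real.norm_eq_abs] at k2
    have k3 := neg_abs_le (∫ x in Ω, h ε (η x) * Lη x)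
    have : volume.real Ω = (volume Ω).toReal := rfl
    rw [this] at k2
    simp only [hB]
    linarith
  -- main
  have hmain : ∀ δ > 0, -(δ * (B / c)) ≤ ∫ x in Ω, D x := by
    intro δ hδ
    obtain ⟨ε₂, hε₂, hS2⟩ : ∃ ε₂ > 0, ∀ x ∈ Ω, η x < ε₂ → S x ≤ δ := by
      have hK := superlevel_compact hΩb S δ hSc
      have hpos : ∀ x ∈ closure Ω ∩ S ⁻¹' Ici δ, 0 < η x := by
        intro x hx
        apply hηpos
        refine mem_of_closure hΩo hx.1 fun hf => ?_
        have h1 := hVb x hf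
        have h2 : δ ≤ S x := hx.2
        simp only [hS] at h2
        linarith
      obtain ⟨ε₂, h1, h2⟩ := hK.exists_forall_le' hηc.continuousOn hpos
      refine ⟨ε₂, h1, fun x hx hlt => ?_⟩
      by_contra hcon
      exact absurd (h2 x ⟨subset_closure hx, (not_le.1 hcon).le⟩) (not_le.2 hlt)
    have hlim : Filter.Tendsto (fun n : ℕ => ∫ x in Ω, h (1 / ((n:ℝ) + 1)) (η x) * D x)
        Filter.atTop (nhds (∫ x in Ω, D x)) := by
      refine tendsto_integral_of_dominated_convergence (fun x => ‖D x‖) ?_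
        (integrableOn_of_closure hΩb hD).norm ?_ ?_
      · intro n
        exact (integrableOn_of_closure hΩb
          (((hh _).continuous.comp hηc).continuousOn.mul hD)).aestronglyMeasurable
      · intro n
        refine Filter.Eventually.of_forall fun x => ?_
        rw [norm_mul, Real.norm_of_nonneg (Real.smoothTransition.nonneg _)]
        exact mul_le_of_le_one_left (norm_nonneg _) (Real.smoothTransition.le_one _)
      · refine (ae_restrict_iff' hΩo.measurableSet).2 (Filter.Eventually.of_forall fun x hx => ?_)
        apply tendsto_const_nhds.congr'
        have := (tendsto_one_div_add_atTop_nhds_zero_nat (𝕜 := ℝ)).eventually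
          (gt_mem_nhds (half_pos (hηpos x hx)))
        filter_upwards [this] with n hn
        rw [hh1 _ (by positivity) _ (by linarith), one_mul]
    refine ge_of_tendsto hlim ?_
    have := (tendsto_one_div_add_atTop_nhds_zero_nat (𝕜 := ℝ)).eventually
          (gt_mem_nhds (half_pos (lt_min hε₁ hε₂)))
    filter_upwards [this] with n hn
    have hn0 : 0 < 1 / ((n:ℝ) + 1) := by positivity
    generalize 1 / ((n:ℝ) + 1) = ε at hn hn0
    have hl1 := min_le_left ε₁ ε₂
    have hl2 := min_le_right ε₁ ε₂
    obtain ⟨j1, j2⟩ := cutoff_div hΩo hΩb η hη hηbd ε hn0 (h ε) (hh ε) (hh0 ε hn0)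
      V hV hVc D hD hDV
    rw [j2]
    have k1 : ∫ x in Ω, deriv (h ε) (η x) * S x ≤ ∫ x in Ω, δ * deriv (h ε) (η x) := by
      refine setIntegral_mono_on j1 ((hint ε).const_mul δ) hΩo.measurableSet ?_
      intro x hx
      by_cases hx2 : 2 * ε < η x
      · rw [hd1 ε hn0 _ hx2]; simp
      · rw [mul_comm δ]
        exact mul_le_mul_of_nonneg_left (hS2 x hx (by linarith)) (hd0 ε hn0 _)
    rw [integral_const_mul] at k1
    have k2 := mul_le_mul_of_nonneg_left (hbound ε hn0 (by linarith)) hδ.le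
    linarith
  refine le_of_forall_pos_le_add fun e he => ?_
  have hBc : 0 ≤ B / c := by positivity
  have h1 := hmain (e / (B / c + 1)) (by positivity)
  have h2 : e / (B / c + 1) * (B / c) ≤ e := by
    rw [div_mul_eq_mul_div, div_le_iff₀ (by positivity)]
    nlinarith
  linarith

lemma contDiffOn_one_aux {E F : Type*} [NormedAddCommGroup E] [NormedSpace ℝ E]
    [NormedAddCommGroup F] [NormedSpace ℝ F] {Ω : Set E} (hΩo : IsOpen Ω) {f : E → F}
    (h1 : ∀ x ∈ Ω, DifferentiableAt ℝ f x) (h2 : ContinuousOn (fderiv ℝ f) Ω) :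
    ContDiffOn ℝ 1 f Ω := by
  rw [show (1 : WithTop ℕ∞) = 0 + 1 by norm_num, contDiffOn_succ_iff_fderiv_of_isOpen hΩo]
  exact ⟨fun x hx => (h1 x hx).differentiableWithinAt, by simp, contDiffOn_zero.2 h2⟩

lemma fderiv_apply_aux {N : ℕ} {f : EuclideanSpace ℝ (Fin N) → ℝ}
    {x : EuclideanSpace ℝ (Fin N)}
    (h : DifferentiableAt ℝ (fun y => fderiv ℝ f y) x) (v w : EuclideanSpace ℝ (Fin N)) :
    fderiv ℝ (fun y => fderiv ℝ f y v) x w = fderiv ℝ (fun y => fderiv ℝ f y) x w v := by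
  have := (h.hasFDerivAt.clm_apply (hasFDerivAt_const v x)).fderiv
  rw [this]; simp

lemma spaceLaplacian_eq {N : ℕ} {f : EuclideanSpace ℝ (Fin N) → ℝ}
    {x : EuclideanSpace ℝ (Fin N)}
    (h : DifferentiableAt ℝ (fun y => fderiv ℝ f y) x) :
    spaceLaplacian f x = ∑ i : Fin N, fderiv ℝ (fun y => fderiv ℝ f y) x
      (EuclideanSpace.single i 1) (EuclideanSpace.single i 1) := by
  unfold spaceLaplacian
  exact Finset.sum_congr rfl fun i _ => fderiv_apply_aux h _ _

lemma gradient_coord {N : ℕ} (f : EuclideanSpace ℝ (Fin N) → ℝ) (x : EuclideanSpace ℝ (Fin N))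
    (i : Fin N) : (gradient f x) i = fderiv ℝ f x (EuclideanSpace.single i 1) := by
  have : ⟪gradient f x, EuclideanSpace.single i (1:ℝ)⟫ = fderiv ℝ f x (EuclideanSpace.single i 1) :=
    inner_gradient_left ..
  rw [← this, EuclideanSpace.inner_single_right]
  simp

lemma gradient_inner {N : ℕ} (f g : EuclideanSpace ℝ (Fin N) → ℝ) (x : EuclideanSpace ℝ (Fin N)) :
    ⟪gradient f x, gradient g x⟫ = ∑ i, fderiv ℝ f x (EuclideanSpace.single i 1) *
      fderiv ℝ g x (EuclideanSpace.single i 1) := by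
  rw [PiLp.inner_apply]
  refine Finset.sum_congr rfl fun i _ => ?_
  rw [← gradient_coord, ← gradient_coord]
  simp [mul_comm]

lemma spatial_ineq {N : ℕ} {Ω : Set (EuclideanSpace ℝ (Fin N))}
    (hΩo : IsOpen Ω) (hΩb : Bornology.IsBounded Ω)
    (η : EuclideanSpace ℝ (Fin N) → ℝ) (hη : ContDiff ℝ 2 η)
    (hηpos : ∀ x ∈ Ω, 0 < η x) (hηbd : ∀ x ∈ frontier Ω, η x = 0)
    (c ε₁ : ℝ) (hc : 0 < c) (hε₁ : 0 < ε₁)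
    (hgrad : ∀ x ∈ Ω, η x < ε₁ → c ≤ ∑ i, (fderiv ℝ η x (EuclideanSpace.single i 1)) ^ 2)
    (Q : EuclideanSpace ℝ (Fin N) → ℝ) 
    (hQ0 : ∀ x ∈ closure Ω, 0 ≤ Q x)
    (hQ1 : ∀ x ∈ closure Ω, DifferentiableAt ℝ Q x)
    (hQ2 : ∀ x ∈ closure Ω, DifferentiableAt ℝ (fun y => fderiv ℝ Q y) x)
    (hQ1c : ContinuousOn (fun x => fderiv ℝ Q x) (closure Ω))
    (hQ2c : ContinuousOn (fun x => fderiv ℝ (fun y => fderiv ℝ Q y) x) (closure Ω))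
    (hQb : ∀ x ∈ frontier Ω, ⟪gradient Q x, gradient η x⟫ = 0)
    (g g1 g2 : ℝ → ℝ) (hg : ∀ r, HasDerivAt g (g1 r) r) (hg1 : ∀ r, HasDerivAt g1 (g2 r) r)
    (hg2 : Continuous g2) (hg1p : ∀ r, 0 ≤ g1 r) :
    IntegrableOn (fun x => g (η x) * spaceLaplacian Q x - Q x *
      (g2 (η x) * ∑ i, (fderiv ℝ η x (EuclideanSpace.single i 1)) ^ 2 +
        g1 (η x) * spaceLaplacian η x)) Ω ∧
    0 ≤ ∫ x in Ω, (g (η x) * spaceLaplacian Q x - Q x *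
      (g2 (η x) * ∑ i, (fderiv ℝ η x (EuclideanSpace.single i 1)) ^ 2 +
        g1 (η x) * spaceLaplacian η x)) := by
  have hg1c : ContDiff ℝ 1 g1 := by
    rw [contDiff_one_iff_deriv]
    refine ⟨fun r => (hg1 r).differentiableAt, ?_⟩
    rwa [show deriv g1 = g2 from funext fun r => (hg1 r).deriv]
  have hgc : ContDiff ℝ 1 g := by
    rw [contDiff_one_iff_deriv]
    refine ⟨fun r => (hg r).differentiableAt, ?_⟩
    rw [show deriv g = g1 from funext fun r => (hg r).deriv]
    exact hg1c.continuous
  have hη1 : ContDiff ℝ 1 η := hη.of_le (by norm_num)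
  have hηc := hη.continuous
  have hdη : ∀ v, ContDiff ℝ 1 (fun x => fderiv ℝ η x v) := fun v =>
    (hη.fderiv_right (m := 1) (by norm_num)).clm_apply contDiff_const
  have hLc : Continuous (spaceLaplacian η) := by
    refine continuous_finsetSum _ fun i _ => ?_
    exact ((hdη _).continuous_fderiv (by norm_num)).clm_apply continuous_const
  have hQc : ContinuousOn Q (closure Ω) := fun x hx =>
    (hQ1 x hx).continuousAt.continuousWithinAt
  have hQC : ContDiffOn ℝ 1 Q Ω := contDiffOn_one_aux hΩo
    (fun x hx => hQ1 x (subset_closure hx)) (hQ1c.mono subset_closure)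
  have hdQC : ContDiffOn ℝ 1 (fun x => fderiv ℝ Q x) Ω := contDiffOn_one_aux hΩo
    (fun x hx => hQ2 x (subset_closure hx)) (hQ2c.mono subset_closure)
  have hLQ : ContinuousOn (spaceLaplacian Q) (closure Ω) := by
    have : ContinuousOn (fun x => ∑ i : Fin N, fderiv ℝ (fun y => fderiv ℝ Q y) x
      (EuclideanSpace.single i 1) (EuclideanSpace.single i 1)) (closure Ω) := by
      refine continuousOn_finsetSum _ fun i _ => ?_
      exact (hQ2c.clm_apply continuousOn_const).clm_apply continuousOn_const
    exact this.congr fun x hx => spaceLaplacian_eq (hQ2 x hx)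
  have hDc : ContinuousOn (fun x => g (η x) * spaceLaplacian Q x - Q x *
      (g2 (η x) * ∑ i, (fderiv ℝ η x (EuclideanSpace.single i 1)) ^ 2 +
        g1 (η x) * spaceLaplacian η x)) (closure Ω) := by
    refine ((hgc.continuous.comp hηc).continuousOn.mul hLQ).sub (hQc.mul ?_)
    refine Continuous.continuousOn ?_
    refine ((hg2.comp hηc).mul (continuous_finsetSum _ fun i _ => ((hdη _).continuous.pow 2))).add
      ((hg1c.continuous.comp hηc).mul hLc)
  refine ⟨integrableOn_of_closure hΩb hDc, ?_⟩
  refine div_int_nonneg hΩo hΩb η hη hηpos hηbd c ε₁ hc hε₁ hgrad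
    (fun i x => g (η x) * fderiv ℝ Q x (EuclideanSpace.single i 1) -
      Q x * (g1 (η x) * fderiv ℝ η x (EuclideanSpace.single i 1))) ?_ ?_ ?_ _ hDc ?_
  · intro i
    exact ((hgc.comp hη1).contDiffOn.mul (hdQC.clm_apply contDiffOn_const)).sub
      (hQC.mul ((hg1c.comp hη1).mul (hdη _)).contDiffOn)
  · intro i
    exact ((hgc.continuous.comp hηc).continuousOn.mul (hQ1c.clm_apply continuousOn_const)).sub
      (hQc.mul ((hg1c.continuous.comp hηc).mul (hdη _).continuous).continuousOn)
  · intro x hx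
    have hxc : x ∈ closure Ω := frontier_subset_closure hx
    have h0 := hQb x hx
    rw [gradient_inner] at h0
    have : ∑ i, (g (η x) * fderiv ℝ Q x (EuclideanSpace.single i 1) -
      Q x * (g1 (η x) * fderiv ℝ η x (EuclideanSpace.single i 1))) *
        fderiv ℝ η x (EuclideanSpace.single i 1) =
        g (η x) * (∑ i, fderiv ℝ Q x (EuclideanSpace.single i 1) *
          fderiv ℝ η x (EuclideanSpace.single i 1)) -
        Q x * g1 (η x) * ∑ i, (fderiv ℝ η x (EuclideanSpace.single i 1)) ^ 2 := by
      rw [Finset.mul_sum, Finset.mul_sum, ← Finset.sum_sub_distrib]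
      exact Finset.sum_congr rfl fun i _ => by ring
    rw [this, h0]
    have h1 : 0 ≤ Q x * g1 (η x) * ∑ i, (fderiv ℝ η x (EuclideanSpace.single i 1)) ^ 2 :=
      mul_nonneg (mul_nonneg (hQ0 x hxc) (hg1p _)) (Finset.sum_nonneg fun i _ => sq_nonneg _)
    linarith
  · intro x hx
    have hxc := subset_closure hx
    have e0 : HasFDerivAt η (fderiv ℝ η x) x :=
      ((hη1.differentiable (by norm_num)) x).hasFDerivAt
    have e1 : HasFDerivAt (fun x => g (η x)) (g1 (η x) • fderiv ℝ η x) x :=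
      (hg _).comp_hasFDerivAt x e0
    have e2 : HasFDerivAt (fun x => g1 (η x)) (g2 (η x) • fderiv ℝ η x) x :=
      (hg1 _).comp_hasFDerivAt x e0
    have e3 := (hQ1 x hxc).hasFDerivAt
    have e4 : ∀ v, HasFDerivAt (fun y => fderiv ℝ Q y v)
        (fderiv ℝ (fun y => fderiv ℝ Q y v) x) x := fun v =>
      (((hQ2 x hxc).clm_apply (differentiableAt_const v))).hasFDerivAt
    have e5 : ∀ v, HasFDerivAt (fun y => fderiv ℝ η y v)
        (fderiv ℝ (fun y => fderiv ℝ η y v) x) x := fun v =>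
      (((hdη v).differentiable (by norm_num)) x).hasFDerivAt
    have e6 : ∀ i : Fin N, fderiv ℝ (fun x => g (η x) * fderiv ℝ Q x (EuclideanSpace.single i 1) -
      Q x * (g1 (η x) * fderiv ℝ η x (EuclideanSpace.single i 1))) x (EuclideanSpace.single i 1)
      = g (η x) * fderiv ℝ (fun y => fderiv ℝ Q y (EuclideanSpace.single i 1)) x
          (EuclideanSpace.single i 1)
        - Q x * (g2 (η x) * (fderiv ℝ η x (EuclideanSpace.single i 1)) ^ 2 +
          g1 (η x) * fderiv ℝ (fun y => fderiv ℝ η y (EuclideanSpace.single i 1)) x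
          (EuclideanSpace.single i 1)) := by
      intro i
      have e7 : HasFDerivAt (fun x => g (η x) * fderiv ℝ Q x (EuclideanSpace.single i 1) -
        Q x * (g1 (η x) * fderiv ℝ η x (EuclideanSpace.single i 1))) _ x :=
        (e1.mul (e4 (EuclideanSpace.single i 1))).sub
          (e3.mul (e2.mul (e5 (EuclideanSpace.single i 1))))
      rw [e7.fderiv]
      simp
      ring
    rw [Finset.sum_congr rfl fun i _ => e6 i, Finset.sum_sub_distrib, ← Finset.mul_sum,
      ← Finset.mul_sum, Finset.sum_add_distrib, ← Finset.mul_sum, ← Finset.mul_sum]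
    rfl

lemma time_step {T : ℝ} (hT : 0 < T) (F F' W : ℝ → ℝ) (K : ℝ)
    (hF : ∀ t ∈ Ioo 0 T, HasDerivAt F (F' t) t) (h0 : ∀ t ∈ Ioo 0 T, 0 ≤ F t)
    (hK : ∀ t ∈ Ioo 0 T, F t ≤ K * (t * (T - t))) (hW : IntegrableOn W (Ioo 0 T))
    (hFW : ∀ t ∈ Ioo 0 T, F' t ≤ W t) : 0 ≤ ∫ t in Ioo 0 T, W t := by
  set g : ℝ → ℝ := (Ioo 0 T).indicator F with hg
  have hgF : ∀ t ∈ Ioo 0 T, g =ᶠ[nhds t] F := by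
    intro t ht
    filter_upwards [isOpen_Ioo.mem_nhds ht] with y hy
    simp [hg, indicator_of_mem hy]
  have hg0 : g 0 = 0 := by simp [hg]
  have hgT : g T = 0 := by simp [hg]
  have hb : ∀ t ∈ Icc 0 T, 0 ≤ g t ∧ g t ≤ |K| * (t * (T - t)) := by
    intro t ht
    have hτ : 0 ≤ t * (T - t) := mul_nonneg ht.1 (by linarith [ht.2])
    by_cases h : t ∈ Ioo 0 T
    · rw [hg, indicator_of_mem h]
      exact ⟨h0 t h, (hK t h).trans (by gcongr; exact le_abs_self K)⟩
    · rw [hg, indicator_of_notMem h]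
      exact ⟨le_rfl, by positivity⟩
  have hend : ∀ t ∈ Icc 0 T, t * (T - t) = 0 → g t = 0 → ContinuousWithinAt g (Icc 0 T) t := by
    intro t ht hz hgz
    have hc : ContinuousWithinAt (fun t => |K| * (t * (T - t))) (Icc 0 T) t := by fun_prop
    unfold ContinuousWithinAt at hc ⊢
    rw [hgz]
    simp only [hz, mul_zero] at hc
    refine tendsto_of_tendsto_of_tendsto_of_le_of_le' tendsto_const_nhds hc ?_ ?_
    · filter_upwards [self_mem_nhdsWithin] with y hy using (hb y hy).1
    · filter_upwards [self_mem_nhdsWithin] with y hy using (hb y hy).2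
  have hcont : ContinuousOn g (Icc 0 T) := by
    intro t ht
    rcases eq_or_lt_of_le ht.1 with h | h
    · subst h; exact hend _ ht (by simp) hg0
    rcases eq_or_lt_of_le ht.2 with h' | h'
    · subst h'; exact hend _ ht (by simp) hgT
    · exact ((hF t ⟨h, h'⟩).continuousAt.congr (hgF t ⟨h, h'⟩).symm).continuousWithinAt
  have := intervalIntegral.sub_le_integral_of_hasDeriv_right_of_le hT.le hcont
    (g' := F') (φ := W)
    (fun t ht => ((hF t ht).congr_of_eventuallyEq (hgF t ht)).hasDerivWithinAt)
    ((integrableOn_Icc_iff_integrableOn_Ioo (by simp) (by simp)).2 hW) hFW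
  rw [hg0, hgT, intervalIntegral.integral_of_le hT.le, integral_Ioc_eq_integral_Ioo] at this
  linarith

lemma prod_integrable {N : ℕ} {Ω : Set (EuclideanSpace ℝ (Fin N))}
    (hΩo : IsOpen Ω) (hΩb : Bornology.IsBounded Ω) {T : ℝ}
    (w : ℝ → EuclideanSpace ℝ (Fin N) → ℝ) (K : ℝ)
    (hw : ContinuousOn (fun p : ℝ × EuclideanSpace ℝ (Fin N) => w p.1 p.2) (Ioo 0 T ×ˢ Ω))
    (hK : ∀ t ∈ Ioo 0 T, ∀ x ∈ Ω, ‖w t x‖ ≤ K) :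
    IntegrableOn (fun t => ∫ x in Ω, w t x) (Ioo 0 T) := by
  have hm : MeasurableSet (Ioo 0 T ×ˢ Ω) := measurableSet_Ioo.prod hΩo.measurableSet
  have h1 : IntegrableOn (fun p : ℝ × EuclideanSpace ℝ (Fin N) => w p.1 p.2) (Ioo 0 T ×ˢ Ω)
      ((volume : Measure ℝ).prod volume) := by
    refine IntegrableOn.of_bound ?_ (hw.aestronglyMeasurable hm) K ?_
    · rw [Measure.prod_prod]
      exact ENNReal.mul_lt_top (by simp) hΩb.measure_lt_top
    · exact (ae_restrict_iff' hm).2 (Filter.Eventually.of_forall fun p hp => hK _ hp.1 _ hp.2)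
  unfold IntegrableOn at h1
  rw [← Measure.prod_restrict] at h1
  exact h1.integral_prod_left

lemma deriv_int {N : ℕ} {Ω : Set (EuclideanSpace ℝ (Fin N))}
    (hΩo : IsOpen Ω) (hΩb : Bornology.IsBounded Ω) {T : ℝ}
    (f f' : ℝ → EuclideanSpace ℝ (Fin N) → ℝ)
    (hf : ContinuousOn (fun p : ℝ × EuclideanSpace ℝ (Fin N) => f p.1 p.2) (Ioo 0 T ×ˢ closure Ω))
    (hf' : ContinuousOn (fun p : ℝ × EuclideanSpace ℝ (Fin N) => f' p.1 p.2)
      (Ioo 0 T ×ˢ closure Ω))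
    (hd : ∀ t ∈ Ioo 0 T, ∀ x ∈ Ω, HasDerivAt (fun t => f t x) (f' t x) t)
    (t : ℝ) (ht : t ∈ Ioo 0 T) :
    IntegrableOn (f' t) Ω ∧
    HasDerivAt (fun t => ∫ x in Ω, f t x) (∫ x in Ω, f' t x) t := by
  have hsl : ∀ (f : ℝ → EuclideanSpace ℝ (Fin N) → ℝ), 
      ContinuousOn (fun p : ℝ × EuclideanSpace ℝ (Fin N) => f p.1 p.2) (Ioo 0 T ×ˢ closure Ω) →
      ∀ t ∈ Ioo 0 T, ContinuousOn (f t) (closure Ω) := by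
    intro f hf t ht
    exact hf.comp (f := fun x => (t, x)) (by fun_prop) (fun x hx => ⟨ht, hx⟩)
  obtain ⟨a, b, hta, hab⟩ : ∃ a b, t ∈ Ioo a b ∧ Icc a b ⊆ Ioo 0 T := by
    refine ⟨t / 2, (t + T) / 2, ⟨by linarith [ht.1], by linarith [ht.2]⟩, fun y hy => ?_⟩
    exact ⟨by linarith [ht.1, hy.1], by linarith [ht.2, hy.2]⟩
  obtain ⟨K, hK⟩ := (isCompact_Icc (a := a) (b := b)).prod hΩb.isCompact_closure
    |>.exists_bound_of_continuousOn (hf'.mono (prod_mono hab subset_rfl))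
  refine hasDerivAt_integral_of_dominated_loc_of_deriv_le (bound := fun _ => K)
    (isOpen_Ioo.mem_nhds hta) ?_ (integrableOn_of_closure hΩb (hsl f hf t ht))
    (integrableOn_of_closure hΩb (hsl f' hf' t ht)).aestronglyMeasurable ?_ ?_ ?_
  · filter_upwards [isOpen_Ioo.mem_nhds ht] with y hy
    exact (integrableOn_of_closure hΩb (hsl f hf y hy)).aestronglyMeasurable
  · refine (ae_restrict_iff' hΩo.measurableSet).2 (Filter.Eventually.of_forall fun x hx y hy => ?_)
    exact hK (y, x) ⟨Ioo_subset_Icc_self hy, subset_closure hx⟩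
  · exact integrableOn_const hΩb.measure_lt_top.ne
  · refine (ae_restrict_iff' hΩo.measurableSet).2 (Filter.Eventually.of_forall fun x hx y hy => ?_)
    exact hd y (hab (Ioo_subset_Icc_self hy)) x hx

lemma ptwise_alg (c L C G Lap T s lam A R E e d τ ξ : ℝ) (hT : 0 < T) (hτ : 0 < τ)
    (hd : |d| ≤ T) (hτT : τ ≤ T ^ 2) (he1 : 1 ≤ e) (heE : e ≤ E)
    (hlam : 1 ≤ lam) (hR : 0 ≤ R) (hRA : A = R ^ 2) (hLap : |Lap| ≤ L) (hC : 1 ≤ C)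
    (hcC : 2 * (2 + L) ≤ c * C) (hG : 0 ≤ G) (hξ : ξ = e / τ)
    (hs : C * E ^ 2 * (T + T ^ 2 + T ^ 2 * R) ≤ s) :
    A + s * ((E - e) * d / τ ^ 2)
      - (((s * lam * ξ) ^ 2 + s * lam ^ 2 * ξ) * G + s * lam * ξ * Lap)
      ≤ - (s ^ 2 * lam ^ 2 * ξ ^ 2 * (G - c / 2)) := by
  have hL : 0 ≤ L := (abs_nonneg _).trans hLap
  have hE1 : 1 ≤ E := he1.trans heE
  have hξ0 : 0 < ξ := by rw [hξ]; positivity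
  have h1 : 1 / τ ≤ ξ := by rw [hξ]; gcongr
  have h2 : 1 ≤ T ^ 2 * ξ := by
    have : 1 ≤ T ^ 2 * (1 / τ) := by rw [mul_one_div, le_div_iff₀ hτ]; linarith
    exact this.trans (by gcongr)
  have hC0 : 0 < C := by linarith
  have hEE : E ≤ E ^ 2 := by nlinarith
  have hEC : C * E ≤ C * E ^ 2 := by gcongr
  have hC1 : C * 1 ≤ C * E ^ 2 := by gcongr; linarith
  have hTR : 0 ≤ T ^ 2 * R := by positivity
  have hT2 : 0 ≤ T ^ 2 := by positivity
  have hX : 0 ≤ T + T ^ 2 + T ^ 2 * R := by positivity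
  have s1 : C * E * T ≤ s :=
    (mul_le_mul hEC (by linarith : T ≤ T + T ^ 2 + T ^ 2 * R) hT.le (by positivity)).trans hs
  have s2 : C * 1 * T ^ 2 ≤ s :=
    (mul_le_mul hC1 (by linarith : T ^ 2 ≤ T + T ^ 2 + T ^ 2 * R) hT2 (by positivity)).trans hs
  have s3 : C * 1 * (T ^ 2 * R) ≤ s :=
    (mul_le_mul hC1 (by linarith : T ^ 2 * R ≤ T + T ^ 2 + T ^ 2 * R) hTR (by positivity)).trans hs
  clear hs
  have hs0 : 0 < s := lt_of_lt_of_le (by positivity) s2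
  obtain ⟨Z, hZ⟩ : ∃ Z, Z = s ^ 2 * lam ^ 2 * ξ ^ 2 := ⟨_, rfl⟩
  have hZ0 : 0 ≤ Z := by rw [hZ]; positivity
  have hlam2 : 1 ≤ lam ^ 2 := by nlinarith
  have hZs : (s * ξ) ^ 2 ≤ Z := by
    have a5 : (s * ξ) ^ 2 * 1 ≤ (s * ξ) ^ 2 * lam ^ 2 := by gcongr
    have a6 : (s * ξ) ^ 2 * lam ^ 2 = Z := by rw [hZ]; ring
    linarith
  have t1 : C * A ≤ Z := by
    have a1 : C * 1 * (T ^ 2 * R) * ξ ≤ s * ξ := by gcongr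
    have a2 : C * R ≤ s * ξ := by
      have : C * R * 1 ≤ C * R * (T ^ 2 * ξ) := by gcongr
      linarith
    have a3 : (C * R) ^ 2 ≤ (s * ξ) ^ 2 := by gcongr
    have a4 : C * A ≤ (C * R) ^ 2 := by
      rw [mul_pow, hRA]
      have : C ≤ C ^ 2 := by nlinarith
      gcongr
    linarith
  have t2 : C * (s * ((E - e) * d / τ ^ 2)) ≤ Z := by
    have a1 : (E - e) * d ≤ E * T := by
      refine (le_abs_self _).trans ?_
      rw [abs_mul]
      have b3 : |E - e| ≤ E := by rw [abs_le]; constructor <;> linarith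
      gcongr
    have a2 : (1 / τ) ^ 2 ≤ ξ ^ 2 := by gcongr
    have a3 : C * (s * ((E - e) * d / τ ^ 2)) ≤ C * (s * (E * T / τ ^ 2)) := by gcongr
    have a4 : C * (s * (E * T / τ ^ 2)) = s * (C * E * T) * (1 / τ) ^ 2 := by
      field_simp
    have a5 : s * (C * E * T) * (1 / τ) ^ 2 ≤ s * s * ξ ^ 2 := by gcongr
    have a6 : s * s * ξ ^ 2 = (s * ξ) ^ 2 := by ring
    linarith
  have t3 : C * (s * lam * ξ * |Lap|) ≤ Z * L := by
    have a1 : C * 1 ≤ C * (T ^ 2 * ξ) := by gcongr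
    have a2 : C * 1 * T ^ 2 * ξ ≤ s * ξ := by gcongr
    have a3 : C ≤ s * ξ := by linarith
    have a4 : C ≤ s * ξ * lam := by nlinarith [mul_pos hs0 hξ0]
    calc C * (s * lam * ξ * |Lap|) ≤ (s * ξ * lam) * (s * lam * ξ * L) := by gcongr
      _ = Z * L := by rw [hZ]; ring
  have t4 : 0 ≤ s * lam ^ 2 * ξ * G := by positivity
  have t5 : - (s * lam * ξ * Lap) ≤ s * lam * ξ * |Lap| := by
    have : -Lap ≤ |Lap| := neg_le_abs _
    have := mul_le_mul_of_nonneg_left this (by positivity : 0 ≤ s * lam * ξ)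
    linarith
  have t6 : A + s * ((E - e) * d / τ ^ 2) + s * lam * ξ * |Lap| ≤ Z * (c / 2) := by
    have h := mul_le_mul_of_nonneg_left hcC hZ0
    have : C * (A + s * ((E - e) * d / τ ^ 2) + s * lam * ξ * |Lap|)
      ≤ C * (Z * (c / 2)) := by linarith
    exact le_of_mul_le_mul_left this (by linarith)
  have t7 : (s * lam * ξ) ^ 2 = Z := by rw [hZ]; ring
  rw [t7, ← hZ]
  linarith

lemma ptwise (c L C G Lap T t s lam M r A : ℝ) (ht : 0 < t) (htT : t < T) (hr : 0 ≤ r)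
    (hrM : r ≤ M) (hlam : 1 ≤ lam) (hA : 0 ≤ A) (hLap : |Lap| ≤ L) (hC : 1 ≤ C)
    (hcC : 2 * (2 + L) ≤ c * C) (hG : 0 ≤ G)
    (hs : C * exp (4 * lam * M) * (T + T ^ 2 + T ^ 2 * √A) ≤ s) :
    A + s * ((exp (2 * lam * M) - exp (lam * r)) * (T - 2 * t) / (t * (T - t)) ^ 2)
      - (((s * lam * (exp (lam * r) / (t * (T - t)))) ^ 2 +
        s * lam ^ 2 * (exp (lam * r) / (t * (T - t)))) * G +
        s * lam * (exp (lam * r) / (t * (T - t))) * Lap)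
      ≤ - (s ^ 2 * lam ^ 2 * (exp (lam * r) / (t * (T - t))) ^ 2 * (G - c / 2)) := by
  have hM : 0 ≤ M := hr.trans hrM
  refine ptwise_alg c L C G Lap T s lam A (√A) _ _ _ _ _ (ht.trans htT)
    (mul_pos ht (by linarith)) ?_ (by nlinarith) (one_le_exp (by positivity)) ?_ hlam
    (sqrt_nonneg A) (sq_sqrt hA).symm hLap hC hcC hG rfl ?_
  · rw [abs_le]; constructor <;> linarith
  · apply exp_le_exp.2
    have : lam * r ≤ lam * M := by gcongr
    have : 0 ≤ lam * M := by positivity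
    linarith
  · rwa [← exp_nat_mul, show ((2:ℕ):ℝ) * (2 * lam * M) = 4 * lam * M by push_cast; ring]

lemma aq_bound {N : ℕ} {Ω : Set (EuclideanSpace ℝ (Fin N))}
    (hΩo : IsOpen Ω) {T : ℝ} (a : ℝ × EuclideanSpace ℝ (Fin N) → ℝ)
    (hab : ∃ B : ℝ, ∀ p ∈ Ioo (0:ℝ) T ×ˢ Ω, |a p| ≤ B)
    (f q : ℝ × EuclideanSpace ℝ (Fin N) → ℝ)
    (hf : ContinuousOn f (Ioo 0 T ×ˢ Ω)) (hq : ContinuousOn q (Ioo 0 T ×ˢ Ω))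
    (hq0 : ∀ p ∈ Ioo 0 T ×ˢ Ω, 0 ≤ q p)
    (hfa : ∀ p ∈ Ioo 0 T ×ˢ Ω, f p = a p * q p) :
    ∀ p ∈ Ioo 0 T ×ˢ Ω,
      f p ≤ (eLpNorm a ⊤ (volume.restrict (Ioo (0:ℝ) T ×ˢ Ω))).toReal * q p := by
  obtain ⟨B, hB⟩ := hab
  have hm : MeasurableSet (Ioo 0 T ×ˢ Ω) := measurableSet_Ioo.prod hΩo.measurableSet
  have hO : IsOpen (Ioo 0 T ×ˢ Ω) := isOpen_Ioo.prod hΩo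
  set μ := (volume : Measure (ℝ × EuclideanSpace ℝ (Fin N))).restrict (Ioo (0:ℝ) T ×ˢ Ω) with hμ
  have hfin : eLpNorm a ⊤ μ ≠ ⊤ := by
    rw [eLpNorm_exponent_top]
    refine (eLpNormEssSup_lt_top_of_ae_bound (C := B) ?_).ne
    exact (ae_restrict_iff' hm).2 (Filter.Eventually.of_forall fun p hp => hB p hp)
  set A := (eLpNorm a ⊤ μ).toReal with hA
  have hae : ∀ᵐ p ∂μ, a p ≤ A := by
    have : ∀ᵐ p ∂μ, ‖a p‖ₑ ≤ eLpNormEssSup a μ := ae_le_eLpNormEssSup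
    filter_upwards [this] with p hp
    rw [← eLpNorm_exponent_top] at hp
    have h2 := ENNReal.toReal_mono hfin hp
    rw [toReal_enorm] at h2
    exact (le_abs_self _).trans h2
  set U := (Ioo 0 T ×ˢ Ω) ∩ (fun p => f p - A * q p) ⁻¹' Ioi 0 with hU
  have hUo : IsOpen U := (hf.sub (continuousOn_const.mul hq)).isOpen_inter_preimage hO isOpen_Ioi
  have hU0 : volume U = 0 := by
    rw [hμ, ae_restrict_iff' hm, ae_iff] at hae
    refine measure_mono_null ?_ hae
    intro p hp
    simp only [mem_ofPred_eq, not_forall]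
    refine ⟨hp.1, fun hle => ?_⟩
    have h1 : 0 < f p - A * q p := hp.2
    rw [hfa p hp.1] at h1
    have := mul_le_mul_of_nonneg_right hle (hq0 p hp.1)
    linarith
  replace hU0 := (IsOpen.measure_eq_zero_iff (volume : Measure (ℝ × EuclideanSpace ℝ (Fin N))) hUo).1 hU0
  intro p hp
  by_contra hcon
  have : p ∈ U := ⟨hp, by simp only [mem_preimage, mem_Ioi]; linarith⟩
  rw [hU0] at this
  exact this

lemma weight_bounds (T t s E e β : ℝ) (ht : 0 < t) (htT : t < T) (hs : 0 < s) (hβ : 0 < β)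
    (hEe : β ≤ E - e) :
    exp (-s * ((E - e) / (t * (T - t)))) ≤ 1 / (s * β) * (t * (T - t)) ∧
    exp (-s * ((E - e) / (t * (T - t)))) * (1 / (t * (T - t))) ^ 2 ≤ 2 / (s * β) ^ 2 := by
  have hτ : 0 < t * (T - t) := mul_pos ht (by linarith)
  generalize t * (T - t) = τ at hτ
  have h1 : exp (-s * ((E - e) / τ)) ≤ exp (-(s * β / τ)) := by
    apply exp_le_exp.2
    have : s * β / τ ≤ s * ((E - e) / τ) := by rw [mul_div_assoc]; gcongr
    linarith
  set y := s * β / τ with hy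
  have hy0 : 0 < y := by positivity
  have h2 : exp (-y) * y ≤ 1 := by
    rw [exp_neg, inv_mul_le_one₀ (exp_pos _)]
    linarith [add_one_le_exp y]
  have h3 : exp (-y) * y ^ 2 ≤ 2 := by
    rw [exp_neg, inv_mul_le_iff₀ (exp_pos _)]
    linarith [quadratic_le_exp_of_nonneg hy0.le]
  constructor
  · refine h1.trans ?_
    have : 1 / (s * β) * τ = 1 / y := by rw [hy]; field_simp
    rw [this, le_div_iff₀ hy0]; exact h2
  · have : (1 / τ) ^ 2 = y ^ 2 / (s * β) ^ 2 := by rw [hy]; field_simp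
    rw [this]
    calc _ ≤ exp (-y) * (y ^ 2 / (s * β) ^ 2) := by gcongr
      _ = exp (-y) * y ^ 2 / (s * β) ^ 2 := by ring
      _ ≤ _ := by gcongr

lemma weight_deriv_r (s E lam τ r : ℝ) :
    HasDerivAt (fun r => exp (-s * ((E - exp (lam * r)) / τ)))
      (exp (-s * ((E - exp (lam * r)) / τ)) * (s * lam * (exp (lam * r) / τ))) r := by
  have h1 : HasDerivAt (fun r => exp (lam * r)) (exp (lam * r) * (lam * 1)) r :=
    ((hasDerivAt_id r).const_mul lam).exp
  have h2 : HasDerivAt (fun r => exp (-s * ((E - exp (lam * r)) / τ)))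
      (exp (-s * ((E - exp (lam * r)) / τ)) * (-s * ((0 - exp (lam * r) * (lam * 1)) / τ))) r :=
    ((((hasDerivAt_const r E).sub h1).div_const τ).const_mul (-s)).exp
  exact h2.congr_deriv (by ring)

lemma weight_deriv_rr (s E lam τ r : ℝ) :
    HasDerivAt (fun r => exp (-s * ((E - exp (lam * r)) / τ)) * (s * lam * (exp (lam * r) / τ)))
      (exp (-s * ((E - exp (lam * r)) / τ)) * ((s * lam * (exp (lam * r) / τ)) ^ 2
        + s * lam ^ 2 * (exp (lam * r) / τ))) r := by
  have h1 : HasDerivAt (fun r => exp (lam * r)) (exp (lam * r) * (lam * 1)) r :=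
    ((hasDerivAt_id r).const_mul lam).exp
  have h2 := (weight_deriv_r s E lam τ r).mul ((h1.div_const τ).const_mul (s * lam))
  refine HasDerivAt.congr_deriv h2 ?_
  ring

lemma weight_deriv_t (s X T t : ℝ) (ht : 0 < t) (htT : t < T) :
    HasDerivAt (fun t => exp (-s * (X / (t * (T - t)))))
      (exp (-s * (X / (t * (T - t)))) * (s * (X * (T - 2 * t) / (t * (T - t)) ^ 2))) t := by
  have hτ : 0 < t * (T - t) := mul_pos ht (by linarith)
  have h1 : HasDerivAt (fun t => t * (T - t)) (1 * (T - t) + t * (0 - 1)) t :=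
    (hasDerivAt_id t).mul ((hasDerivAt_const t T).sub (hasDerivAt_id t))
  have h2 : HasDerivAt (fun t => exp (-s * (X / (t * (T - t)))))
      (exp (-s * (X / (t * (T - t)))) * (-s * ((0 * (t * (T - t)) - X * (1 * (T - t) + t * (0 - 1)))
        / (t * (T - t)) ^ 2))) t :=
    (((hasDerivAt_const t X).div h1 hτ.ne').const_mul (-s)).exp
  exact h2.congr_deriv (by ring)
theorem carleman_L1_neumann
    (N : ℕ) (hN : 1 ≤ N)
    (Ω ω₀ ω : Set (EuclideanSpace ℝ (Fin N)))
    (hΩo : IsOpen Ω) (hΩb : Bornology.IsBounded Ω) (hΩc : IsConnected Ω)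
    (hω₀o : IsOpen ω₀) (hω₀ne : ω₀.Nonempty) (hωo : IsOpen ω) (hωne : ω.Nonempty)
    (hω₀ω : closure ω₀ ⊆ ω) (hωΩ : ω ⊆ Ω)
    (η : EuclideanSpace ℝ (Fin N) → ℝ) (hη : ContDiff ℝ 2 η)
    (hηpos : ∀ x ∈ Ω, 0 < η x) (hηbd : ∀ x ∈ frontier Ω, η x = 0)
    (hηgrad : ∀ x ∈ closure (Ω \ ω₀), 0 < ‖gradient η x‖)
    (M : ℝ) (hM : IsGreatest (η '' closure Ω) M) :
    ∃ C > (0:ℝ), ∃ C₁ > (0:ℝ),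
      ∀ T : ℝ, 0 < T →
      ∀ a : ℝ × EuclideanSpace ℝ (Fin N) → ℝ, Measurable a →
      (∃ B : ℝ, ∀ p ∈ Set.Ioo (0:ℝ) T ×ˢ Ω, |a p| ≤ B) →
      ∀ lam : ℝ, 1 ≤ lam →
      ∀ s : ℝ,
        C * Real.exp (4 * lam * M) *
          (T + T ^ 2 + T ^ 2 * Real.sqrt (eLpNorm a ⊤ (volume.restrict (Set.Ioo (0:ℝ) T ×ˢ Ω))).toReal) ≤ s →
      ∀ q qt : ℝ × EuclideanSpace ℝ (Fin N) → ℝ,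
        ContinuousOn q (Set.Icc 0 T ×ˢ closure Ω) →
        (∀ p ∈ Set.Icc 0 T ×ˢ closure Ω, 0 ≤ q p) →
        (∀ p ∈ Set.Ioo 0 T ×ˢ closure Ω,
          HasDerivAt (fun τ => q (τ, p.2)) (qt p) p.1) →
        ContinuousOn qt (Set.Ioo 0 T ×ˢ closure Ω) →
        (∀ p ∈ Set.Ioo 0 T ×ˢ closure Ω,
          DifferentiableAt ℝ (fun z => q (p.1, z)) p.2) →
        (∀ p ∈ Set.Ioo 0 T ×ˢ closure Ω,
          DifferentiableAt ℝ (fun y => fderiv ℝ (fun z => q (p.1, z)) y) p.2) →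
        ContinuousOn (fun p : ℝ × EuclideanSpace ℝ (Fin N) =>
          fderiv ℝ (fun z => q (p.1, z)) p.2) (Set.Ioo 0 T ×ˢ closure Ω) →
        ContinuousOn (fun p : ℝ × EuclideanSpace ℝ (Fin N) =>
          fderiv ℝ (fun y => fderiv ℝ (fun z => q (p.1, z)) y) p.2)
          (Set.Ioo 0 T ×ˢ closure Ω) →
        (∀ t ∈ Set.Ioo (0:ℝ) T, ∀ x ∈ Ω,
          -qt (t, x) - spaceLaplacian (fun z => q (t, z)) x
            + a (t, x) * q (t, x) = 0) →
        (∀ t ∈ Set.Ioo (0:ℝ) T, ∀ x ∈ frontier Ω,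
          ⟪gradient (fun z => q (t, z)) x, gradient η x⟫ = 0) →
        (∫ t in Set.Ioo (0:ℝ) T, ∫ x in Ω,
            Real.exp (-s * ((Real.exp (2 * lam * M) - Real.exp (lam * η x)) / (t * (T - t)))) * (Real.exp (lam * η x) / (t * (T - t))) ^ 2 * q (t, x))
          ≤ C₁ * ∫ t in Set.Ioo (0:ℝ) T, ∫ x in ω,
            Real.exp (-s * ((Real.exp (2 * lam * M) - Real.exp (lam * η x)) / (t * (T - t)))) * (Real.exp (lam * η x) / (t * (T - t))) ^ 2 * q (t, x) := by
  have hηc := hη.continuous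
  have hdη : ∀ v, ContDiff ℝ 1 (fun x => fderiv ℝ η x v) := fun v =>
    (hη.fderiv_right (m := 1) (by norm_num)).clm_apply contDiff_const
  have hcΩ := hΩb.isCompact_closure
  have hω₀Ω : closure ω₀ ⊆ Ω := hω₀ω.trans hωΩ
  -- constants
  obtain ⟨c, hc, hcG⟩ : ∃ c > 0, ∀ x ∈ closure (Ω \ ω₀),
      c ≤ ∑ i, (fderiv ℝ η x (EuclideanSpace.single i 1)) ^ 2 := by
    have hcomp : IsCompact (closure (Ω \ ω₀)) :=
      hcΩ.of_isClosed_subset isClosed_closure (closure_mono sdiff_subset)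
    refine hcomp.exists_forall_le' (continuous_finsetSum _ fun i _ =>
      (hdη _).continuous.pow 2).continuousOn ?_
    intro x hx
    have h1 := hηgrad x hx
    have h2 : ‖gradient η x‖ ^ 2 = ∑ i, (fderiv ℝ η x (EuclideanSpace.single i 1)) ^ 2 := by
      rw [← real_inner_self_eq_norm_sq, gradient_inner]
      exact Finset.sum_congr rfl fun i _ => by ring
    change 0 < ∑ i, (fderiv ℝ η x (EuclideanSpace.single i 1)) ^ 2
    rw [← h2]; positivity
  obtain ⟨ε₁, hε₁, hεω⟩ : ∃ ε₁ > 0, ∀ x ∈ closure ω₀, ε₁ ≤ η x :=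
    (hcΩ.of_isClosed_subset isClosed_closure (hω₀Ω.trans subset_closure)).exists_forall_le'
      hηc.continuousOn (fun x hx => hηpos x (hω₀Ω hx))
  have hgrad : ∀ x ∈ Ω, η x < ε₁ → c ≤ ∑ i, (fderiv ℝ η x (EuclideanSpace.single i 1)) ^ 2 := by
    intro x hx hlt
    refine hcG x (subset_closure ⟨hx, fun h => ?_⟩)
    have := hεω x (subset_closure h)
    linarith
  have hLc : Continuous (spaceLaplacian η) := by
    refine continuous_finsetSum _ fun i _ => ?_
    exact ((hdη _).continuous_fderiv (by norm_num)).clm_apply continuous_const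
  obtain ⟨L, hL⟩ := hcΩ.exists_bound_of_continuousOn hLc.continuousOn
  obtain ⟨x₀, hx₀⟩ := hωne
  have hηM : ∀ x ∈ closure Ω, η x ≤ M := fun x hx => hM.2 ⟨x, hx, rfl⟩
  have hη0 : ∀ x ∈ closure Ω, 0 ≤ η x := by
    intro x hx
    by_cases h : x ∈ frontier Ω
    · exact (hηbd x h).ge
    · exact (hηpos x (mem_of_closure hΩo hx h)).le
  have hMpos : 0 < M :=
    (hηpos x₀ (hωΩ hx₀)).trans_le (hηM x₀ (subset_closure (hωΩ hx₀)))
  have hL0 : 0 ≤ L := (norm_nonneg _).trans (hL x₀ (subset_closure (hωΩ hx₀)))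
  refine ⟨1 + 2 * (2 + L) / c, by positivity, 2, by norm_num, ?_⟩
  have hC1 : 1 ≤ 1 + 2 * (2 + L) / c := by
    have : 0 ≤ 2 * (2 + L) / c := by positivity
    linarith
  have hcC : 2 * (2 + L) ≤ c * (1 + 2 * (2 + L) / c) := by
    have : c * (1 + 2 * (2 + L) / c) = c + 2 * (2 + L) := by field_simp
    linarith
  have hC0 : 0 < 1 + 2 * (2 + L) / c := by linarith
  generalize 1 + 2 * (2 + L) / c = C at hC1 hcC hC0
  intro T hT a ham hab lam hlam s hs q qt hqc hq0 hqt hqtc hqd1 hqd2 hqc1 hqc2 heq hbd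
  set A := (eLpNorm a ⊤ (volume.restrict (Set.Ioo (0:ℝ) T ×ˢ Ω))).toReal with hA
  have hA0 : 0 ≤ A := ENNReal.toReal_nonneg
  have hs0 : 0 < s := lt_of_lt_of_le (by positivity) hs
  have hsub : Ioo 0 T ×ˢ closure Ω ⊆ Icc 0 T ×ˢ closure Ω :=
    prod_mono Ioo_subset_Icc_self subset_rfl
  have hqc' : ContinuousOn q (Ioo 0 T ×ˢ closure Ω) := hqc.mono hsub
  have hsub2 : Ioo 0 T ×ˢ Ω ⊆ Ioo 0 T ×ˢ closure Ω := prod_mono subset_rfl subset_closure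
  -- the Laplacian of q
  have hLq : ContinuousOn (fun p : ℝ × EuclideanSpace ℝ (Fin N) =>
      spaceLaplacian (fun z => q (p.1, z)) p.2) (Ioo 0 T ×ˢ closure Ω) := by
    have : ContinuousOn (fun p : ℝ × EuclideanSpace ℝ (Fin N) =>
      ∑ i : Fin N, fderiv ℝ (fun y => fderiv ℝ (fun z => q (p.1, z)) y) p.2
      (EuclideanSpace.single i 1) (EuclideanSpace.single i 1)) (Ioo 0 T ×ˢ closure Ω) := by
      refine continuousOn_finsetSum _ fun i _ => ?_
      exact (hqc2.clm_apply continuousOn_const).clm_apply continuousOn_const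
    exact this.congr fun p hp => spaceLaplacian_eq (hqd2 p hp)
  have haq := aq_bound hΩo a hab
    (fun p => qt p + spaceLaplacian (fun z => q (p.1, z)) p.2) q
    ((hqtc.add hLq).mono hsub2) (hqc'.mono hsub2)
    (fun p hp => hq0 p (hsub (hsub2 hp)))
    (fun p hp => by have := heq p.1 hp.1 p.2 hp.2; simp only [Prod.mk.eta] at this; linarith)
  rw [← hA] at haq
  -- weights
  set E := exp (2 * lam * M) with hE
  obtain ⟨β, hβ, hβE⟩ : ∃ β > 0, ∀ x ∈ closure Ω, β ≤ E - exp (lam * η x) := by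
    refine ⟨E - exp (lam * M), ?_, fun x hx => ?_⟩
    · have : exp (lam * M) < E := by
        apply exp_lt_exp.2
        have : 0 < lam * M := by positivity
        linarith
      linarith
    · have : exp (lam * η x) ≤ exp (lam * M) := by
        apply exp_le_exp.2
        have := hηM x hx
        gcongr
      linarith
  let φ : ℝ → EuclideanSpace ℝ (Fin N) → ℝ := fun t x =>
    exp (-s * ((E - exp (lam * η x)) / (t * (T - t))))
  let w : ℝ → EuclideanSpace ℝ (Fin N) → ℝ := fun t x =>
    φ t x * (exp (lam * η x) / (t * (T - t))) ^ 2 * q (t, x)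
  have hτne : ∀ p ∈ Ioo (0:ℝ) T ×ˢ closure Ω, p.1 * (T - p.1) ≠ 0 := fun p hp =>
    (mul_pos hp.1.1 (by linarith [hp.1.2])).ne'
  have hφc : ContinuousOn (fun p : ℝ × EuclideanSpace ℝ (Fin N) => φ p.1 p.2)
      (Ioo 0 T ×ˢ closure Ω) := by
    refine ContinuousOn.rexp (continuousOn_const.mul (ContinuousOn.div ?_ ?_ hτne))
    · exact Continuous.continuousOn (by fun_prop)
    · exact Continuous.continuousOn (by fun_prop)
  have hwc : ContinuousOn (fun p : ℝ × EuclideanSpace ℝ (Fin N) => w p.1 p.2)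
      (Ioo 0 T ×ˢ closure Ω) := by
    refine (hφc.mul ((ContinuousOn.div ?_ ?_ hτne).pow 2)).mul hqc'
    · exact Continuous.continuousOn (by fun_prop)
    · exact Continuous.continuousOn (by fun_prop)
  obtain ⟨Km, hKm⟩ := ((isCompact_Icc (a := (0:ℝ)) (b := T)).prod hcΩ).exists_bound_of_continuousOn
    hqc
  have hKm0 : 0 ≤ Km := (norm_nonneg _).trans
    (hKm (0, x₀) ⟨⟨le_rfl, hT.le⟩, subset_closure (hωΩ hx₀)⟩)
  have hqK : ∀ t ∈ Ioo 0 T, ∀ x ∈ closure Ω, 0 ≤ q (t, x) ∧ q (t, x) ≤ Km := fun t ht x hx =>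
    ⟨hq0 (t, x) (hsub ⟨ht, hx⟩), (le_abs_self _).trans (hKm (t, x) (hsub ⟨ht, hx⟩))⟩
  have hwK : ∀ t ∈ Ioo 0 T, ∀ x ∈ Ω, ‖w t x‖ ≤ 2 / (s * β) ^ 2 * (exp (lam * M)) ^ 2 * Km := by
    intro t ht x hx
    have hxc := subset_closure hx
    obtain ⟨h1, h2⟩ := hqK t ht x hxc
    have h3 := (weight_bounds T t s E (exp (lam * η x)) β ht.1 ht.2 hs0 hβ (hβE x hxc)).2
    have h4 : exp (lam * η x) ≤ exp (lam * M) := by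
      apply exp_le_exp.2
      have := hηM x hxc
      gcongr
    have h5 : w t x = φ t x * (1 / (t * (T - t))) ^ 2 * (exp (lam * η x)) ^ 2 * q (t, x) := by
      simp only [w]; ring
    have h6 : 0 ≤ w t x := by simp only [w, φ]; positivity
    rw [Real.norm_of_nonneg h6, h5]
    simp only [φ]
    gcongr
  have hIΩ : IntegrableOn (fun t => ∫ x in Ω, w t x) (Ioo 0 T) :=
    prod_integrable hΩo hΩb w _ (hwc.mono hsub2) hwK
  have hIω : IntegrableOn (fun t => ∫ x in ω, w t x) (Ioo 0 T) :=
    prod_integrable hωo (hΩb.subset hωΩ) w _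
      (hwc.mono (prod_mono subset_rfl (hωΩ.trans subset_closure)))
      (fun t ht x hx => hwK t ht x (hωΩ hx))
  have hwi : ∀ t ∈ Ioo 0 T, IntegrableOn (w t) Ω := fun t ht =>
    integrableOn_of_closure hΩb
      (hwc.comp (f := fun x => (t, x)) (by fun_prop) (fun x hx => ⟨ht, hx⟩))
  -- time derivative
  let f' : ℝ → EuclideanSpace ℝ (Fin N) → ℝ := fun t x =>
    φ t x * (s * ((E - exp (lam * η x)) * (T - 2 * t) / (t * (T - t)) ^ 2)) * q (t, x)
      + φ t x * qt (t, x)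
  have hf'c : ContinuousOn (fun p : ℝ × EuclideanSpace ℝ (Fin N) => f' p.1 p.2)
      (Ioo 0 T ×ˢ closure Ω) := by
    refine ((hφc.mul (continuousOn_const.mul (ContinuousOn.div ?_ ?_
      (fun p hp => pow_ne_zero 2 (hτne p hp))))).mul hqc').add (hφc.mul hqtc)
    · exact Continuous.continuousOn (by fun_prop)
    · exact Continuous.continuousOn (by fun_prop)
  have hder := deriv_int hΩo hΩb (fun t x => φ t x * q (t, x)) f' (hφc.mul hqc') hf'c
    (fun t ht x hx => (weight_deriv_t s _ T t ht.1 ht.2).mul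
      (hqt (t, x) ⟨ht, subset_closure hx⟩))
  set k := s ^ 2 * lam ^ 2 * (c / 2) with hk
  have hk0 : 0 < k := by positivity
  have hineq : ∀ t ∈ Ioo 0 T, ∫ x in Ω, f' t x ≤
      -(k * ((∫ x in Ω, w t x) - 2 * ∫ x in ω, w t x)) := by
    intro t ht
    obtain ⟨j1, j2⟩ := spatial_ineq hΩo hΩb η hη hηpos hηbd c ε₁ hc hε₁ hgrad
      (fun x => q (t, x)) (fun x hx => (hqK t ht x hx).1) (fun x hx => hqd1 (t, x) ⟨ht, hx⟩)
      (fun x hx => hqd2 (t, x) ⟨ht, hx⟩)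
      (hqc1.comp (f := fun x => (t, x)) (by fun_prop) (fun x hx => ⟨ht, hx⟩))
      (hqc2.comp (f := fun x => (t, x)) (by fun_prop) (fun x hx => ⟨ht, hx⟩))
      (hbd t ht) _ _ _ (weight_deriv_r s E lam (t * (T - t)))
      (weight_deriv_rr s E lam (t * (T - t))) (by fun_prop)
      (fun r => by
        have : 0 < t * (T - t) := mul_pos ht.1 (by linarith [ht.2])
        positivity)
    have hind : IntegrableOn (ω.indicator (w t)) Ω := (hwi t ht).indicator hωo.measurableSet
    have hindI : ∫ x in Ω, ω.indicator (w t) x = ∫ x in ω, w t x := by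
      rw [setIntegral_indicator hωo.measurableSet, inter_eq_self_of_subset_right hωΩ]
    have hmono := setIntegral_mono_on (hder t ht).1
      (j1.neg.add (((hwi t ht).const_mul (-k)).add (hind.const_mul (2 * k)))) hΩo.measurableSet
      (fun x hx => by
        have hxc := subset_closure hx
        have hpt := ptwise c L C (∑ i, (fderiv ℝ η x (EuclideanSpace.single i 1)) ^ 2)
          (spaceLaplacian η x) T t s lam M (η x) A ht.1 ht.2 (hη0 x hxc) (hηM x hxc) hlam hA0
          (hL x hxc) hC1 hcC (Finset.sum_nonneg fun i _ => sq_nonneg _) hs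
        have hG0 : 0 ≤ ∑ i, (fderiv ℝ η x (EuclideanSpace.single i 1)) ^ 2 :=
          Finset.sum_nonneg fun i _ => sq_nonneg _
        have hGω : x ∉ ω → c ≤ ∑ i, (fderiv ℝ η x (EuclideanSpace.single i 1)) ^ 2 :=
          fun h => hcG x (subset_closure ⟨hx, fun h' => h (hω₀ω (subset_closure h'))⟩)
        have hq1 := haq (t, x) ⟨ht, hx⟩
        have hφp : 0 < φ t x := exp_pos _
        have hq := (hqK t ht x hxc).1
        simp only [Pi.add_apply, Pi.neg_apply] at hq1 ⊢
        simp only [f']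
        change _ ≤ -(φ t x * spaceLaplacian (fun z => q (t, z)) x - q (t, x) * (φ t x * _ * _ +
          φ t x * _ * _)) + _
        rw [← hE] at hpt
        have hwx : w t x = φ t x * q (t, x) * (exp (lam * η x) / (t * (T - t))) ^ 2 := by
          simp only [w]; ring
        generalize exp (lam * η x) / (t * (T - t)) = ξ at *
        generalize (∑ i, (fderiv ℝ η x (EuclideanSpace.single i 1)) ^ 2) = G at *
        generalize s * ((E - exp (lam * η x)) * (T - 2 * t) / (t * (T - t)) ^ 2) = P at *
        generalize spaceLaplacian η x = Lp at *
        generalize spaceLaplacian (fun z => q (t, z)) x = Lq at *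
        have hfq : 0 ≤ φ t x * q (t, x) := by positivity
        have m1 := mul_le_mul_of_nonneg_left hq1 hφp.le
        have m2 := mul_le_mul_of_nonneg_left hpt hfq
        have m3 : -(φ t x * q (t, x) * (s ^ 2 * lam ^ 2 * ξ ^ 2 * (G - c / 2))) ≤
            -k * w t x + 2 * k * ω.indicator (w t) x := by
          have hz : 0 ≤ φ t x * q (t, x) * (s ^ 2 * lam ^ 2 * ξ ^ 2) := by positivity
          by_cases hxω : x ∈ ω
          · rw [indicator_of_mem hxω, hwx, hk]
            have := mul_nonneg hz hG0
            linarith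
          · rw [indicator_of_notMem hxω, hwx, hk]
            have := mul_le_mul_of_nonneg_left (hGω hxω) hz
            linarith
        linarith)
    refine hmono.trans ?_
    rw [integral_add' j1.neg (((hwi t ht).const_mul (-k)).add (hind.const_mul (2 * k))),
      integral_neg', integral_add' ((hwi t ht).const_mul (-k)) (hind.const_mul (2 * k)),
      integral_const_mul, integral_const_mul, hindI]
    linarith
  have hfinal := time_step hT (fun t => ∫ x in Ω, φ t x * q (t, x)) (fun t => ∫ x in Ω, f' t x)
    (fun t => -(k * ((∫ x in Ω, w t x) - 2 * ∫ x in ω, w t x)))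
    (1 / (s * β) * Km * volume.real Ω) (fun t ht => (hder t ht).2)
    (fun t ht => setIntegral_nonneg hΩo.measurableSet fun x hx =>
      mul_nonneg (exp_pos _).le (hqK t ht x (subset_closure hx)).1)
    (fun t ht => by
      have h1 := norm_setIntegral_le_of_norm_le_const (μ := volume) (s := Ω)
        (f := fun x => φ t x * q (t, x))
        (C := 1 / (s * β) * (t * (T - t)) * Km) hΩb.measure_lt_top (fun x hx => by
          have hxc := subset_closure hx
          obtain ⟨h1, h2⟩ := hqK t ht x hxc
          have h3 := (weight_bounds T t s E (exp (lam * η x)) β ht.1 ht.2 hs0 hβ (hβE x hxc)).1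
          have h6 : 0 ≤ φ t x * q (t, x) := mul_nonneg (exp_pos _).le h1
          rw [Real.norm_of_nonneg h6]
          exact mul_le_mul h3 h2 h1 ((exp_pos _).le.trans h3))
      refine (le_abs_self _).trans (h1.trans (le_of_eq ?_))
      ring)
    (((hIΩ.sub (hIω.const_mul 2)).const_mul k).neg) hineq
  rw [integral_neg, integral_const_mul, integral_sub hIΩ (hIω.const_mul 2),
    integral_const_mul] at hfinal
  have h7 : (∫ t in Ioo 0 T, ∫ x in Ω, w t x) - 2 * ∫ t in Ioo 0 T, ∫ x in ω, w t x ≤ 0 := by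
    by_contra hcon
    have := mul_pos hk0 (not_le.1 hcon)
    linarith
  exact sub_nonpos.1 h7
end

section
/- There exists a constant C > 0, depending only on Ω, ω₀, ω and η⁰, such that for every T > 0, every bounded measurable potential a, and every classical nonnegative solution q of the adjoint heat equation with Neumann boundary condition, one has ∫_{T/4}^{3T/4} ∫_Ω q(t,x) dx dt ≤ exp(C(1 + 1/T + ‖a‖_∞^{1/2})) ∫₀^T ∫_ω q(t,x) dx dt. -/
open MeasureTheory Real Set RealInnerProductSpace

section Aux
open Filter Topology

lemma aux_intOn {X : Type*} [TopologicalSpace X] [T2Space X] [MeasurableSpace X] [OpensMeasurableSpace X]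
    {μ : Measure X} [IsFiniteMeasureOnCompacts μ] {K S : Set X} (hK : IsCompact K) (hS : S ⊆ K)
    {f : X → ℝ} (hf : ContinuousOn f K) : IntegrableOn f S μ :=
  (hf.integrableOn_compact hK).mono_set hS

lemma aux_div {N : ℕ} {Ω : Set (EuclideanSpace ℝ (Fin N))} (hΩo : IsOpen Ω)
    (hΩb : Bornology.IsBounded Ω) {χ V : EuclideanSpace ℝ (Fin N) → ℝ}
    {V' : EuclideanSpace ℝ (Fin N) → (EuclideanSpace ℝ (Fin N) →L[ℝ] ℝ)}
    (hχ : ContDiff ℝ 1 χ) (hχ0 : ∀ x ∈ frontier Ω, χ =ᶠ[𝓝 x] 0)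
    (hV : ∀ x ∈ Ω, HasFDerivAt V (V' x) x) (hVc : ContinuousOn V (closure Ω))
    (hV'c : ContinuousOn V' (closure Ω)) (v : EuclideanSpace ℝ (Fin N)) :
    ∫ x in Ω, (χ x * V' x v + fderiv ℝ χ x v * V x) = 0 := by
  have hK : IsCompact (closure Ω) := hΩb.isCompact_closure
  have hχd : Continuous (fderiv ℝ χ) := hχ.continuous_fderiv (by norm_num)
  have hχc : Continuous χ := hχ.continuous
  have key : ∀ x, HasFDerivAt (Ω.indicator (fun x => χ x * V x))
      (Ω.indicator (fun x => χ x • V' x + V x • fderiv ℝ χ x) x) x := by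
    intro x
    by_cases hx : x ∈ Ω
    · have h1 : HasFDerivAt (fun x => χ x * V x) (χ x • V' x + V x • fderiv ℝ χ x) x :=
        ((hχ.differentiable (by norm_num)) x).hasFDerivAt.mul (hV x hx)
      rw [indicator_of_mem hx]
      refine h1.congr_of_eventuallyEq ?_
      filter_upwards [hΩo.mem_nhds hx] with y hy
      rw [indicator_of_mem hy]
    · rw [indicator_of_notMem hx]
      refine (hasFDerivAt_const (0:ℝ) x).congr_of_eventuallyEq ?_
      by_cases hx' : x ∈ closure Ω
      · have : x ∈ frontier Ω := by
          rw [hΩo.frontier_eq]; exact ⟨hx', hx⟩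
        filter_upwards [hχ0 x this] with y hy
        have hy' : χ y = 0 := hy
        by_cases hyΩ : y ∈ Ω <;> simp [hyΩ, hy']
      · filter_upwards [isClosed_closure.isOpen_compl.mem_nhds hx'] with y hy
        rw [indicator_of_notMem]
        exact fun h => hy (subset_closure h)
  have hfd : ∀ x, fderiv ℝ (Ω.indicator (fun x => χ x * V x)) x v
      = Ω.indicator (fun x => χ x * V' x v + fderiv ℝ χ x v * V x) x := by
    intro x
    rw [(key x).fderiv]
    by_cases hx : x ∈ Ω
    · simp [hx, mul_comm]
    · simp [hx]
  have i1 : Integrable (Ω.indicator (fun x => χ x * V x)) := by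
    rw [integrable_indicator_iff hΩo.measurableSet]
    exact aux_intOn hK subset_closure (hχc.continuousOn.mul hVc)
  have i2 : Integrable (Ω.indicator (fun x => χ x * V' x v + fderiv ℝ χ x v * V x)) := by
    rw [integrable_indicator_iff hΩo.measurableSet]
    refine aux_intOn hK subset_closure ?_
    exact (hχc.continuousOn.mul (hV'c.clm_apply continuousOn_const)).add
      ((hχd.continuousOn.clm_apply continuousOn_const).mul hVc)
  have := integral_mul_fderiv_eq_neg_fderiv_mul_of_integrable (μ := volume)
    (f := Ω.indicator (fun x => χ x * V x)) (g := fun _ => (1:ℝ)) (v := v)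
    (by simpa only [hfd, mul_one] using i2) (by simp) (by simpa using i1)
    (fun x _ => (key x).differentiableAt) (fun x _ => by fun_prop)
  simp only [hfd, mul_one] at this
  rw [integral_indicator hΩo.measurableSet] at this
  simp at this
  exact this

lemma aux_theta : ∃ D : ℝ, 0 ≤ D ∧ ∀ r, |deriv smoothTransition r| ≤ D := by
  have hc : Continuous (deriv smoothTransition) :=
    (smoothTransition.contDiff (n := 1)).continuous_deriv (by norm_num)
  obtain ⟨D, hD⟩ := (isCompact_Icc (a := (0:ℝ)) (b := 1)).exists_bound_of_continuousOn hc.continuousOn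
  refine ⟨D, (norm_nonneg _).trans (hD 0 (by simp)), fun r => ?_⟩
  have hD0 : 0 ≤ D := (norm_nonneg _).trans (hD 0 (by simp))
  by_cases h0 : r < 0
  · have : smoothTransition =ᶠ[𝓝 r] fun _ => 0 := by
      filter_upwards [Iio_mem_nhds h0] with y hy
      exact smoothTransition.zero_of_nonpos (le_of_lt hy)
    rw [this.deriv_eq]; simpa using hD0
  by_cases h1 : 1 < r
  · have : smoothTransition =ᶠ[𝓝 r] fun _ => 1 := by
      filter_upwards [Ioi_mem_nhds h1] with y hy
      exact smoothTransition.one_of_one_le (le_of_lt hy)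
    rw [this.deriv_eq]; simpa using hD0
  exact hD r ⟨not_lt.1 h0, not_lt.1 h1⟩

lemma aux_theta1 {r : ℝ} (h1 : 1 < r) : deriv smoothTransition r = 0 := by
  have : smoothTransition =ᶠ[𝓝 r] fun _ => 1 := by
    filter_upwards [Ioi_mem_nhds h1] with y hy
    exact smoothTransition.one_of_one_le (le_of_lt hy)
  rw [this.deriv_eq]; simp

lemma aux_green {N : ℕ} {Ω : Set (EuclideanSpace ℝ (Fin N))} (hΩo : IsOpen Ω)
    (hΩb : Bornology.IsBounded Ω) {η : EuclideanSpace ℝ (Fin N) → ℝ} (hη : ContDiff ℝ 2 η)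
    (hηpos : ∀ x ∈ Ω, 0 < η x) (hηbd : ∀ x ∈ frontier Ω, η x = 0)
    {u w : EuclideanSpace ℝ (Fin N) → ℝ} (hw : ContDiff ℝ 2 w) {c : ℝ}
    (hw0 : ∀ x ∈ Ω, |w x| ≤ c * η x)
    (hwη : ∀ x ∈ Ω, 0 ≤ ∑ i : Fin N, fderiv ℝ η x (EuclideanSpace.single i 1) *
      fderiv ℝ w x (EuclideanSpace.single i 1))
    (hu0 : ∀ x ∈ Ω, 0 ≤ u x) (hud : ∀ x ∈ closure Ω, DifferentiableAt ℝ u x)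
    (hudd : ∀ x ∈ closure Ω, DifferentiableAt ℝ (fderiv ℝ u) x)
    (hu2 : ContinuousOn (fderiv ℝ (fderiv ℝ u)) (closure Ω)) :
    ∫ x in Ω, u x * spaceLaplacian w x ≤ ∫ x in Ω, w x * spaceLaplacian u x := by
  have hK : IsCompact (closure Ω) := hΩb.isCompact_closure
  have hwd : Differentiable ℝ w := hw.differentiable (by norm_num)
  have hw1 : ContDiff ℝ 1 (fderiv ℝ w) := hw.fderiv_right (by norm_num)
  have hwdd : Differentiable ℝ (fderiv ℝ w) := hw1.differentiable (by norm_num)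
  have hw2 : Continuous (fderiv ℝ (fderiv ℝ w)) := hw1.continuous_fderiv (by norm_num)
  have hηd : Differentiable ℝ η := hη.differentiable (by norm_num)
  have hη1 : Continuous (fderiv ℝ η) := hη.continuous_fderiv (by norm_num)
  have huc : ContinuousOn u (closure Ω) := fun x hx => (hud x hx).continuousAt.continuousWithinAt
  have hu1 : ContinuousOn (fderiv ℝ u) (closure Ω) :=
    fun x hx => (hudd x hx).continuousAt.continuousWithinAt
  have hwc := hwd.continuous
  have hw1c := hwdd.continuous
  have hηc := hηd.continuous
  set e : Fin N → EuclideanSpace ℝ (Fin N) := fun i => EuclideanSpace.single i 1 with he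
  have hLu : ∀ x ∈ closure Ω, spaceLaplacian u x = ∑ i, fderiv ℝ (fderiv ℝ u) x (e i) (e i) := by
    intro x hx
    unfold spaceLaplacian
    refine Finset.sum_congr rfl fun i _ => ?_
    rw [((hudd x hx).hasFDerivAt.clm_apply (hasFDerivAt_const (e i) x)).fderiv]
    simp [he]
  have hLw : ∀ x, spaceLaplacian w x = ∑ i, fderiv ℝ (fderiv ℝ w) x (e i) (e i) := by
    intro x
    unfold spaceLaplacian
    refine Finset.sum_congr rfl fun i _ => ?_
    rw [((hwdd x).hasFDerivAt.clm_apply (hasFDerivAt_const (e i) x)).fderiv]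
    simp [he]
  have hLuc : ContinuousOn (spaceLaplacian u) (closure Ω) := by
    refine ContinuousOn.congr ?_ hLu
    exact continuousOn_finsetSum _ fun i _ =>
      (hu2.clm_apply continuousOn_const).clm_apply continuousOn_const
  have hLwc : Continuous (spaceLaplacian w) := by
    rw [funext hLw]; fun_prop
  -- cutoffs
  let χ : ℕ → EuclideanSpace ℝ (Fin N) → ℝ := fun n x => smoothTransition ((n:ℝ) * η x - 1)
  have hχ : ∀ n, ContDiff ℝ 1 (χ n) := fun n =>
    (smoothTransition.contDiff (n := 1)).comp
      ((contDiff_const.mul (hη.of_le (by norm_num))).sub contDiff_const)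
  have hχ' : ∀ n x v, fderiv ℝ (χ n) x v
      = deriv smoothTransition ((n:ℝ) * η x - 1) * n * fderiv ℝ η x v := by
    intro n x v
    have h1 : HasDerivAt smoothTransition (deriv smoothTransition ((n:ℝ) * η x - 1)) ((n:ℝ) * η x - 1) :=
      ((smoothTransition.contDiff (n := 1)).differentiable (by norm_num) _).hasDerivAt
    have h2 : HasFDerivAt (fun x => (n:ℝ) * η x - 1) ((n:ℝ) • fderiv ℝ η x) x :=
      ((hηd x).hasFDerivAt.const_mul (n:ℝ)).sub_const 1
    have := (h1.comp_hasFDerivAt x h2).fderiv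
    change fderiv ℝ (χ n) x = _ at this
    rw [this]; simp [mul_assoc]
  have hχ0 : ∀ n, ∀ x ∈ frontier Ω, χ n =ᶠ[𝓝 x] 0 := by
    intro n x hx
    have : Tendsto (fun y => (n:ℝ) * η y - 1) (𝓝 x) (𝓝 ((n:ℝ) * η x - 1)) :=
      (by fun_prop : Continuous fun y => (n:ℝ) * η y - 1).tendsto x
    rw [hηbd x hx] at this
    filter_upwards [this.eventually_lt_const (show (n:ℝ) * 0 - 1 < 0 by simp)] with y hy
    exact smoothTransition.zero_of_nonpos hy.le
  let V : Fin N → EuclideanSpace ℝ (Fin N) → ℝ := fun i x =>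
    w x * fderiv ℝ u x (e i) - u x * fderiv ℝ w x (e i)
  let V' : Fin N → EuclideanSpace ℝ (Fin N) → (EuclideanSpace ℝ (Fin N) →L[ℝ] ℝ) := fun i x =>
    (w x • (fderiv ℝ (fderiv ℝ u) x).flip (e i) + fderiv ℝ u x (e i) • fderiv ℝ w x)
      - (u x • (fderiv ℝ (fderiv ℝ w) x).flip (e i) + fderiv ℝ w x (e i) • fderiv ℝ u x)
  have hV : ∀ i, ∀ x ∈ Ω, HasFDerivAt (V i) (V' i x) x := by
    intro i x hx
    have hx' := subset_closure hx
    have a1 : HasFDerivAt (fun y => fderiv ℝ u y (e i)) ((fderiv ℝ (fderiv ℝ u) x).flip (e i)) x := by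
      simpa using (hudd x hx').hasFDerivAt.clm_apply (hasFDerivAt_const (e i) x)
    have a2 : HasFDerivAt (fun y => fderiv ℝ w y (e i)) ((fderiv ℝ (fderiv ℝ w) x).flip (e i)) x := by
      simpa using (hwdd x).hasFDerivAt.clm_apply (hasFDerivAt_const (e i) x)
    exact ((hwd x).hasFDerivAt.mul a1).sub ((hud x hx').hasFDerivAt.mul a2)
  have hflip : ∀ i, Continuous fun L : EuclideanSpace ℝ (Fin N) →L[ℝ] EuclideanSpace ℝ (Fin N) →L[ℝ] ℝ =>
      L.flip (e i) := by
    intro i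
    exact (ContinuousLinearMap.apply ℝ (EuclideanSpace ℝ (Fin N) →L[ℝ] ℝ) (e i)).continuous.comp
      (ContinuousLinearMap.flipₗᵢ ℝ _ _ _).continuous
  have hVc : ∀ i, ContinuousOn (V i) (closure Ω) := fun i =>
    (hwc.continuousOn.mul (hu1.clm_apply continuousOn_const)).sub
      (huc.mul (hw1c.continuousOn.clm_apply continuousOn_const))
  have hV'c : ∀ i, ContinuousOn (V' i) (closure Ω) := fun i =>
    ((hwc.continuousOn.smul ((hflip i).comp_continuousOn hu2)).add
      ((hu1.clm_apply continuousOn_const).smul hw1c.continuousOn)).sub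
    ((huc.smul ((hflip i).comp_continuousOn hw2.continuousOn)).add
      ((hw1c.continuousOn.clm_apply continuousOn_const).smul hu1))
  have hdiv : ∀ n i, ∫ x in Ω, (χ n x * V' i x (e i) + fderiv ℝ (χ n) x (e i) * V i x) = 0 :=
    fun n i => aux_div hΩo hΩb (hχ n) (hχ0 n) (hV i) (hVc i) (hV'c i) (e i)
  have hχ'c : ∀ n, Continuous (fderiv ℝ (χ n)) := fun n => (hχ n).continuous_fderiv (by norm_num)
  -- R n
  let R : ℕ → EuclideanSpace ℝ (Fin N) → ℝ := fun n x =>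
    deriv smoothTransition ((n:ℝ) * η x - 1) * n * (w x * ∑ i, fderiv ℝ η x (e i) * fderiv ℝ u x (e i))
  let Gf : EuclideanSpace ℝ (Fin N) → ℝ := fun x => w x * spaceLaplacian u x - u x * spaceLaplacian w x
  have hGc : ContinuousOn Gf (closure Ω) :=
    (hwc.continuousOn.mul hLuc).sub (huc.mul hLwc.continuousOn)
  have hsumc : ContinuousOn (fun x => ∑ i, fderiv ℝ η x (e i) * fderiv ℝ u x (e i)) (closure Ω) :=
    continuousOn_finsetSum _ fun i _ => (hη1.continuousOn.clm_apply continuousOn_const).mul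
      (hu1.clm_apply continuousOn_const)
  have hθc : Continuous (deriv smoothTransition) :=
    (smoothTransition.contDiff (n := 1)).continuous_deriv (by norm_num)
  have hRc : ∀ n, ContinuousOn (R n) (closure Ω) := by
    intro n
    refine ContinuousOn.mul ?_ (hwc.continuousOn.mul hsumc)
    exact (by fun_prop : Continuous fun x => deriv smoothTransition ((n:ℝ) * η x - 1) * n).continuousOn
  have hχG : ∀ n, ContinuousOn (fun x => χ n x * Gf x) (closure Ω) := fun n =>
    (hχ n).continuous.continuousOn.mul hGc
  have ineq : ∀ n, 0 ≤ (∫ x in Ω, χ n x * Gf x) + ∫ x in Ω, R n x := by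
    intro n
    rw [← integral_add (aux_intOn hK subset_closure (hχG n)) (aux_intOn hK subset_closure (hRc n))]
    have hs : ∫ x in Ω, ∑ i, (χ n x * V' i x (e i) + fderiv ℝ (χ n) x (e i) * V i x) = 0 := by
      rw [integral_finsetSum]
      · exact Finset.sum_eq_zero fun i _ => hdiv n i
      · intro i _
        refine aux_intOn hK subset_closure ?_
        exact ((hχ n).continuous.continuousOn.mul ((hV'c i).clm_apply continuousOn_const)).add
          (((hχ'c n).continuousOn.clm_apply continuousOn_const).mul (hVc i))
    rw [← hs]
    refine setIntegral_mono_on ?_ ?_ hΩo.measurableSet ?_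
    · refine aux_intOn hK subset_closure (continuousOn_finsetSum _ fun i _ => ?_)
      exact ((hχ n).continuous.continuousOn.mul ((hV'c i).clm_apply continuousOn_const)).add
          (((hχ'c n).continuousOn.clm_apply continuousOn_const).mul (hVc i))
    · exact aux_intOn hK subset_closure ((hχG n).add (hRc n))
    · intro x hx
      have hx' := subset_closure hx
      have hpos : 0 ≤ deriv smoothTransition ((n:ℝ) * η x - 1) * n :=
        mul_nonneg smoothTransition.monotone.deriv_nonneg (Nat.cast_nonneg n)
      have e1 : ∑ i, (χ n x * V' i x (e i) + fderiv ℝ (χ n) x (e i) * V i x)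
          = χ n x * Gf x + R n x - deriv smoothTransition ((n:ℝ) * η x - 1) * n * (u x *
            ∑ i, fderiv ℝ η x (e i) * fderiv ℝ w x (e i)) := by
        simp only [Gf, R, hLu x hx', hLw x, hχ', V, V']
        simp only [Finset.mul_sum, ← Finset.sum_sub_distrib, ← Finset.sum_add_distrib]
        refine Finset.sum_congr rfl fun i _ => ?_
        simp
        ring
      rw [e1]
      have := mul_nonneg hpos (mul_nonneg (hu0 x hx) (hwη x hx))
      linarith
  obtain ⟨D, hD0, hD⟩ := aux_theta
  obtain ⟨B, hB⟩ := hK.exists_bound_of_continuousOn hsumc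
  have lim1 : Tendsto (fun n => ∫ x in Ω, χ n x * Gf x) atTop (𝓝 (∫ x in Ω, Gf x)) := by
    refine tendsto_integral_of_dominated_convergence (fun x => |Gf x|)
      (fun n => (aux_intOn hK subset_closure (hχG n)).aestronglyMeasurable)
      (aux_intOn hK subset_closure hGc).abs ?_ ?_
    · intro n
      filter_upwards with x
      rw [norm_mul, Real.norm_eq_abs, Real.norm_eq_abs, abs_of_nonneg (smoothTransition.nonneg _)]
      exact mul_le_of_le_one_left (abs_nonneg _) (smoothTransition.le_one _)
    · filter_upwards [ae_restrict_mem hΩo.measurableSet] with x hx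
      refine tendsto_const_nhds.congr' ?_
      obtain ⟨n0, hn0⟩ := exists_nat_gt (2 / η x)
      filter_upwards [eventually_ge_atTop n0] with n hn
      have : 2 < n * η x := by
        rw [← div_lt_iff₀ (hηpos x hx)]
        exact hn0.trans_le (by exact_mod_cast hn)
      simp only [χ]
      rw [smoothTransition.one_of_one_le (by linarith), one_mul]
  have lim2 : Tendsto (fun n => ∫ x in Ω, R n x) atTop (𝓝 (∫ x in Ω, (0:ℝ))) := by
    refine tendsto_integral_of_dominated_convergence (fun x => D * (2 * |c|) * B)
      (fun n => (aux_intOn hK subset_closure (hRc n)).aestronglyMeasurable)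
      (aux_intOn hK subset_closure continuousOn_const) ?_ ?_
    · intro n
      filter_upwards [ae_restrict_mem hΩo.measurableSet] with x hx
      have hB1 := hB x (subset_closure hx)
      have hB0 : 0 ≤ B := (norm_nonneg _).trans hB1
      by_cases h : 1 < (n:ℝ) * η x - 1
      · simp only [R]
        rw [aux_theta1 h]; simp; positivity
      · have h1 : ‖(n:ℝ) * w x‖ ≤ 2 * |c| := by
          rw [norm_mul, Real.norm_eq_abs, Real.norm_eq_abs, abs_of_nonneg (Nat.cast_nonneg n)]
          have h2 : |w x| ≤ |c| * η x :=
            (hw0 x hx).trans (mul_le_mul_of_nonneg_right (le_abs_self c) (hηpos x hx).le)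
          have h3 := mul_le_mul_of_nonneg_left h2 (Nat.cast_nonneg (α := ℝ) n)
          have h4 : |c| * ((n:ℝ) * η x) ≤ |c| * 2 :=
            mul_le_mul_of_nonneg_left (by linarith) (abs_nonneg c)
          linarith
        have e2 : R n x = deriv smoothTransition ((n:ℝ) * η x - 1) * ((n:ℝ) * w x) *
            ∑ i, fderiv ℝ η x (e i) * fderiv ℝ u x (e i) := by simp only [R]; ring
        rw [e2, norm_mul, norm_mul]
        have := hD ((n:ℝ) * η x - 1)
        rw [← Real.norm_eq_abs] at this
        gcongr
    · filter_upwards [ae_restrict_mem hΩo.measurableSet] with x hx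
      refine tendsto_const_nhds.congr' ?_
      obtain ⟨n0, hn0⟩ := exists_nat_gt (2 / η x)
      filter_upwards [eventually_ge_atTop n0] with n hn
      have : 2 < n * η x := by
        rw [← div_lt_iff₀ (hηpos x hx)]
        exact hn0.trans_le (by exact_mod_cast hn)
      simp only [R]
      rw [aux_theta1 (by linarith)]; simp
  have fin := ge_of_tendsto' (lim1.add lim2) ineq
  simp only [Gf] at fin
  have j1 : IntegrableOn (fun x => w x * spaceLaplacian u x) Ω :=
    aux_intOn hK subset_closure (hwc.continuousOn.mul hLuc)
  have j2 : IntegrableOn (fun x => u x * spaceLaplacian w x) Ω :=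
    aux_intOn hK subset_closure (huc.mul hLwc.continuousOn)
  rw [integral_sub j1 j2] at fin
  simp at fin
  exact fin

lemma aux_w {N : ℕ} {η : EuclideanSpace ℝ (Fin N) → ℝ} (hη : ContDiff ℝ 2 η) (P K : ℝ) :
    (∀ x v, fderiv ℝ (fun x => exp (P * (η x - K)) - exp (-(P * K))) x v
      = exp (P * (η x - K)) * (P * fderiv ℝ η x v)) ∧
    (∀ x, spaceLaplacian (fun x => exp (P * (η x - K)) - exp (-(P * K))) x
      = exp (P * (η x - K)) * (P ^ 2 * (∑ i, (fderiv ℝ η x (EuclideanSpace.single i 1)) ^ 2)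
        + P * spaceLaplacian η x)) := by
  have hηd : Differentiable ℝ η := hη.differentiable (by norm_num)
  have hη1 : ContDiff ℝ 1 (fderiv ℝ η) := hη.fderiv_right (by norm_num)
  have hηdd : Differentiable ℝ (fderiv ℝ η) := hη1.differentiable (by norm_num)
  have hexp : ∀ x, HasFDerivAt (fun x => exp (P * (η x - K)))
      (exp (P * (η x - K)) • (P • fderiv ℝ η x)) x := fun x =>
    (((hηd x).hasFDerivAt.sub_const K).const_mul P).exp
  have h1 : ∀ x v, fderiv ℝ (fun x => exp (P * (η x - K)) - exp (-(P * K))) x v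
      = exp (P * (η x - K)) * (P * fderiv ℝ η x v) := by
    intro x v
    rw [((hexp x).sub_const _).fderiv]; simp
  refine ⟨h1, fun x => ?_⟩
  unfold spaceLaplacian
  simp only [h1]
  rw [Finset.mul_sum, Finset.mul_sum, ← Finset.sum_add_distrib, Finset.mul_sum]
  refine Finset.sum_congr rfl fun i _ => ?_
  set v : EuclideanSpace ℝ (Fin N) := EuclideanSpace.single i 1
  have h2 : DifferentiableAt ℝ (fun y => fderiv ℝ η y v) x :=
    (hηdd x).clm_apply (differentiableAt_const v)
  rw [((hexp x).fun_mul (h2.hasFDerivAt.const_mul P)).fderiv]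
  simp
  ring

lemma aux_time {N : ℕ} {Ω : Set (EuclideanSpace ℝ (Fin N))} (hΩo : IsOpen Ω)
    (hΩb : Bornology.IsBounded Ω) {f g : ℝ × EuclideanSpace ℝ (Fin N) → ℝ} {t1 t2 : ℝ} (h12 : t1 ≤ t2)
    (hfg : ∀ p ∈ Icc t1 t2 ×ˢ closure Ω, HasDerivAt (fun τ => f (τ, p.2)) (g p) p.1)
    (hg : ContinuousOn g (Icc t1 t2 ×ˢ closure Ω)) :
    ∫ p in Ioc t1 t2 ×ˢ Ω, g p = ∫ x in Ω, (f (t2, x) - f (t1, x)) := by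
  have hK : IsCompact (Icc t1 t2 ×ˢ closure Ω) := isCompact_Icc.prod hΩb.isCompact_closure
  have hi : IntegrableOn g (Ioc t1 t2 ×ˢ Ω) (volume.prod volume) :=
    aux_intOn hK (prod_mono Ioc_subset_Icc_self subset_closure) hg
  rw [Measure.volume_eq_prod, setIntegral_prod _ hi]
  rw [IntegrableOn, ← Measure.prod_restrict] at hi
  rw [integral_integral_swap (f := fun t x => g (t, x)) hi]
  refine setIntegral_congr_fun hΩo.measurableSet fun x hx => ?_
  rw [← intervalIntegral.integral_of_le h12]
  have hc : ContinuousOn (fun t => g (t, x)) (Icc t1 t2) :=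
    hg.comp (by fun_prop) (fun t ht => ⟨ht, subset_closure hx⟩)
  refine intervalIntegral.integral_eq_sub_of_hasDerivAt (f := fun t => f (t, x)) ?_ ?_
  · intro t ht
    rw [uIcc_of_le h12] at ht
    exact hfg (t, x) ⟨ht, subset_closure hx⟩
  · exact ContinuousOn.intervalIntegrable (by rwa [uIcc_of_le h12])

lemma aux_main {N : ℕ} {Ω ω : Set (EuclideanSpace ℝ (Fin N))} (hΩo : IsOpen Ω)
    (hΩb : Bornology.IsBounded Ω) (hωo : IsOpen ω) (hωΩ : ω ⊆ Ω)
    {η : EuclideanSpace ℝ (Fin N) → ℝ} (hη : ContDiff ℝ 2 η)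
    (hηpos : ∀ x ∈ Ω, 0 < η x) (hηbd : ∀ x ∈ frontier Ω, η x = 0)
    {K L c0 s A t1 t2 : ℝ} (hK1 : ∀ x ∈ Ω, η x + 1 ≤ K) (hK0 : 0 ≤ K)
    (hL : ∀ x ∈ Ω, |spaceLaplacian η x| ≤ L)
    (hc0 : 0 < c0) (hc : ∀ x ∈ Ω, x ∉ ω →
      c0 ≤ ∑ i, (fderiv ℝ η x (EuclideanSpace.single i 1)) ^ 2)
    (ht1 : 0 < t1) (h12 : t1 ≤ t2) (hs : 0 < s) (hA : 0 ≤ A)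
    (hs1 : 6 * K ≤ c0 * s) (hs2 : ∀ t ∈ Icc t1 t2, 6 * L ≤ c0 * (s / t))
    (hs3 : ∀ t ∈ Icc t1 t2, 6 * A ≤ c0 * (s / t) ^ 2)
    {q qt : ℝ × EuclideanSpace ℝ (Fin N) → ℝ}
    (hqc : ContinuousOn q (Icc t1 t2 ×ˢ closure Ω))
    (hq0 : ∀ p ∈ Icc t1 t2 ×ˢ closure Ω, 0 ≤ q p)
    (hqt : ∀ p ∈ Icc t1 t2 ×ˢ closure Ω, HasDerivAt (fun τ => q (τ, p.2)) (qt p) p.1)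
    (hqtc : ContinuousOn qt (Icc t1 t2 ×ˢ closure Ω))
    (hqd : ∀ p ∈ Icc t1 t2 ×ˢ closure Ω, DifferentiableAt ℝ (fun z => q (p.1, z)) p.2)
    (hqdd : ∀ p ∈ Icc t1 t2 ×ˢ closure Ω,
          DifferentiableAt ℝ (fun y => fderiv ℝ (fun z => q (p.1, z)) y) p.2)
    (hq2 : ContinuousOn (fun p : ℝ × EuclideanSpace ℝ (Fin N) =>
          fderiv ℝ (fun y => fderiv ℝ (fun z => q (p.1, z)) y) p.2) (Icc t1 t2 ×ˢ closure Ω))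
    (hae : ∀ᵐ p : ℝ × EuclideanSpace ℝ (Fin N), p ∈ Ioc t1 t2 ×ˢ Ω →
      qt p + spaceLaplacian (fun z => q (p.1, z)) p.2 ≤ A * q p) :
    c0 / 2 * ∫ p in Ioc t1 t2 ×ˢ Ω, (s / p.1) ^ 2 * exp (s / p.1 * (η p.2 - K)) * q p ≤
      c0 * (∫ p in Ioc t1 t2 ×ˢ ω, (s / p.1) ^ 2 * exp (s / p.1 * (η p.2 - K)) * q p)
      + ∫ x in Ω, q (t1, x) * exp (-(s / t1)) := by
  have hcl : IsCompact (closure Ω) := hΩb.isCompact_closure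
  set KK : Set (ℝ × EuclideanSpace ℝ (Fin N)) := Icc t1 t2 ×ˢ closure Ω with hKK
  have hKc : IsCompact KK := isCompact_Icc.prod hcl
  set S : Set (ℝ × EuclideanSpace ℝ (Fin N)) := Ioc t1 t2 ×ˢ Ω with hS
  have hSK : S ⊆ KK := prod_mono Ioc_subset_Icc_self subset_closure
  have hSm : MeasurableSet S := measurableSet_Ioc.prod hΩo.measurableSet
  have hηd : Differentiable ℝ η := hη.differentiable (by norm_num)
  have hηc : Continuous η := hηd.continuous
  have hη1c : Continuous (fderiv ℝ η) := hη.continuous_fderiv (by norm_num)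
  have hη1 : ContDiff ℝ 1 (fderiv ℝ η) := hη.fderiv_right (by norm_num)
  have hηdd : Differentiable ℝ (fderiv ℝ η) := hη1.differentiable (by norm_num)
  have hη2 : Continuous (fderiv ℝ (fderiv ℝ η)) := hη1.continuous_fderiv (by norm_num)
  have hLη : ∀ x, spaceLaplacian η x = ∑ i : Fin N, fderiv ℝ (fderiv ℝ η) x
      (EuclideanSpace.single i 1) (EuclideanSpace.single i 1) := by
    intro x
    unfold spaceLaplacian
    refine Finset.sum_congr rfl fun i _ => ?_
    rw [((hηdd x).hasFDerivAt.clm_apply (hasFDerivAt_const _ x)).fderiv]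
    simp
  have hLηc : Continuous (spaceLaplacian η) := by
    rw [funext hLη]; fun_prop
  let G : EuclideanSpace ℝ (Fin N) → ℝ := fun x => ∑ i, (fderiv ℝ η x (EuclideanSpace.single i 1)) ^ 2
  have hGc : Continuous G := by
    show Continuous fun x => ∑ i, (fderiv ℝ η x (EuclideanSpace.single i 1)) ^ 2
    fun_prop
  have hG0 : ∀ x, 0 ≤ G x := fun x => Finset.sum_nonneg fun i _ => sq_nonneg _
  have hpos : ∀ p ∈ KK, p.1 ≠ 0 := fun p hp => (ht1.trans_le hp.1.1).ne'
  let P : ℝ × EuclideanSpace ℝ (Fin N) → ℝ := fun p => s / p.1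
  have hPc : ContinuousOn P KK := continuousOn_const.div continuousOn_fst hpos
  let φ : ℝ × EuclideanSpace ℝ (Fin N) → ℝ := fun p => exp (s / p.1 * (η p.2 - K))
  have hη2c : ContinuousOn (fun p : ℝ × EuclideanSpace ℝ (Fin N) => η p.2) KK := (hηc.comp continuous_snd).continuousOn
  have hφc : ContinuousOn φ KK := (hPc.mul (hη2c.sub continuousOn_const)).rexp
  let ψ : ℝ × EuclideanSpace ℝ (Fin N) → ℝ := fun p => exp (-(s / p.1 * K))
  have hψc : ContinuousOn ψ KK := (hPc.mul continuousOn_const).neg.rexp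
  let w : ℝ × EuclideanSpace ℝ (Fin N) → ℝ := fun p => φ p - ψ p
  have hwc : ContinuousOn w KK := hφc.sub hψc
  let wt : ℝ × EuclideanSpace ℝ (Fin N) → ℝ := fun p => s / p.1 ^ 2 * ((K - η p.2) * φ p - K * ψ p)
  have hwtc : ContinuousOn wt KK :=
    (continuousOn_const.div (continuousOn_fst.pow 2) (fun p hp => pow_ne_zero 2 (hpos p hp))).mul
      (((continuousOn_const.sub hη2c).mul hφc).sub (continuousOn_const.mul hψc))
  let Lw : ℝ × EuclideanSpace ℝ (Fin N) → ℝ := fun p => φ p * ((s / p.1) ^ 2 * G p.2 + s / p.1 * spaceLaplacian η p.2)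
  have hLwc : ContinuousOn Lw KK :=
    hφc.mul (((hPc.pow 2).mul (hGc.comp continuous_snd).continuousOn).add
      (hPc.mul (hLηc.comp continuous_snd).continuousOn))
  let Q : ℝ × EuclideanSpace ℝ (Fin N) → ℝ := fun p => spaceLaplacian (fun z => q (p.1, z)) p.2
  have hQc : ContinuousOn Q KK := by
    have : ∀ p ∈ KK, Q p = ∑ i : Fin N, fderiv ℝ (fun y => fderiv ℝ (fun z => q (p.1, z)) y) p.2
        (EuclideanSpace.single i 1) (EuclideanSpace.single i 1) := by
      intro p hp
      simp only [Q]
      unfold spaceLaplacian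
      refine Finset.sum_congr rfl fun i _ => ?_
      rw [((hqdd p hp).hasFDerivAt.clm_apply (hasFDerivAt_const _ p.2)).fderiv]
      simp
    refine ContinuousOn.congr ?_ this
    exact continuousOn_finsetSum _ fun i _ =>
      (hq2.clm_apply continuousOn_const).clm_apply continuousOn_const
  have hwt : ∀ p ∈ KK, HasDerivAt (fun τ => w (τ, p.2)) (wt p) p.1 := by
    intro p hp
    have h0 := hpos p hp
    have h1 : HasDerivAt (fun τ : ℝ => s / τ) (-(s / p.1 ^ 2)) p.1 := by
      have := (hasDerivAt_inv h0).const_mul s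
      have e : s * -(p.1 ^ 2)⁻¹ = -(s / p.1 ^ 2) := by ring
      rw [e] at this
      exact this
    have h2 := (h1.mul_const (η p.2 - K)).exp
    have h3 := (h1.mul_const K).fun_neg.exp
    refine (h2.sub h3).congr_deriv ?_
    simp only [wt, φ, ψ]
    ring
  -- time integration
  have htime := aux_time hΩo hΩb (f := fun p => q p * w p) (g := fun p => qt p * w p + q p * wt p) h12
    (fun p hp => (hqt p hp).mul (hwt p hp)) ((hqtc.mul hwc).add (hqc.mul hwtc))
  have hw0 : ∀ p ∈ KK, 0 ≤ η p.2 → 0 ≤ w p := by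
    intro p hp hh
    have : 0 < s / p.1 := div_pos hs (ht1.trans_le hp.1.1)
    simp only [w, φ, ψ, sub_nonneg, exp_le_exp]
    nlinarith
  have hww : ∀ p, w p ≤ φ p := fun p => by
    have : 0 < ψ p := exp_pos _
    simp only [w]; linarith
  have hφ1 : ∀ p ∈ S, φ p ≤ exp (-(s / p.1)) := by
    intro p hp
    have : 0 < s / p.1 := div_pos hs (ht1.trans hp.1.1)
    simp only [φ, exp_le_exp]
    nlinarith [hK1 p.2 hp.2]
  have hslice : ∀ t ∈ Icc t1 t2, ∀ f : ℝ × EuclideanSpace ℝ (Fin N) → ℝ, ContinuousOn f KK →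
      IntegrableOn (fun x => f (t, x)) Ω := by
    intro t ht f hf
    exact aux_intOn hcl subset_closure (hf.comp (by fun_prop) (fun x hx => ⟨ht, hx⟩))
  have ht1m : t1 ∈ Icc t1 t2 := ⟨le_rfl, h12⟩
  have ht2m : t2 ∈ Icc t1 t2 := ⟨h12, le_rfl⟩
  have hend : -∫ x in Ω, q (t1, x) * exp (-(s / t1)) ≤ ∫ p in S, (qt p * w p + q p * wt p) := by
    rw [htime, ← integral_neg]
    refine setIntegral_mono_on ?_ ?_ hΩo.measurableSet ?_
    · exact ((hslice t1 ht1m q hqc).mul_const _).neg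
    · exact (hslice t2 ht2m _ (hqc.mul hwc)).sub (hslice t1 ht1m _ (hqc.mul hwc))
    · intro x hx
      have hx' := subset_closure hx
      have a1 := mul_nonneg (hq0 (t2, x) ⟨ht2m, hx'⟩) (hw0 (t2, x) ⟨ht2m, hx'⟩ (hηpos x hx).le)
      have a2 : w (t1, x) ≤ exp (-(s / t1)) := by
        refine (hww _).trans ?_
        have : 0 < s / t1 := div_pos hs ht1
        simp only [φ, exp_le_exp]
        nlinarith [hK1 x hx]
      have a3 := mul_le_mul_of_nonneg_left a2 (hq0 (t1, x) ⟨ht1m, hx'⟩)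
      linarith
  -- space
  have hspace : ∫ p in S, q p * Lw p ≤ ∫ p in S, w p * Q p := by
    have i1 : IntegrableOn (fun p => q p * Lw p) S (volume.prod volume) := aux_intOn hKc hSK (hqc.mul hLwc)
    have i2 : IntegrableOn (fun p => w p * Q p) S (volume.prod volume) := aux_intOn hKc hSK (hwc.mul hQc)
    rw [Measure.volume_eq_prod, setIntegral_prod _ i1, setIntegral_prod _ i2]
    rw [IntegrableOn, ← Measure.prod_restrict] at i1 i2
    refine setIntegral_mono_on i1.integral_prod_left i2.integral_prod_left measurableSet_Ioc ?_
    intro t ht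
    have ht' := Ioc_subset_Icc_self ht
    have htpos : 0 < t := ht1.trans ht.1
    have hP : 0 < s / t := div_pos hs htpos
    obtain ⟨f1, f2⟩ := aux_w hη (s / t) K
    obtain ⟨M, hM⟩ : ∃ M, ∀ x ∈ Ω, |w (t, x)| ≤ M * η x := by
      refine ⟨s / t * exp (s / t * K), fun x hx => ?_⟩
      rw [abs_of_nonneg (hw0 (t, x) ⟨ht', subset_closure hx⟩ (hηpos x hx).le)]
      have b1 : -(s / t * η x) + 1 ≤ exp (-(s / t * η x)) := add_one_le_exp _
      have b2 : exp (-(s / t * K)) = exp (s / t * (η x - K)) * exp (-(s / t * η x)) := by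
        rw [← exp_add]; ring_nf
      have b3 : exp (s / t * (η x - K)) ≤ exp (s / t * K) := by
        rw [exp_le_exp]
        exact mul_le_mul_of_nonneg_left (by linarith [hK1 x hx]) hP.le
      simp only [w, φ, ψ]
      rw [b2]
      have b4 : exp (s / t * (η x - K)) - exp (s / t * (η x - K)) * exp (-(s / t * η x))
          ≤ exp (s / t * (η x - K)) * (s / t * η x) := by
        nlinarith [exp_pos (s / t * (η x - K))]
      have b5 := mul_le_mul_of_nonneg_right b3 (mul_nonneg hP.le (hηpos x hx).le)
      linarith
    have := aux_green (u := fun z => q (t, z)) (w := fun x => w (t, x)) hΩo hΩb hη hηpos hηbd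
      (by
        simp only [w, φ, ψ]
        exact ((contDiff_const.mul (hη.sub contDiff_const)).exp).sub contDiff_const) hM
      (by
        intro x hx
        refine Finset.sum_nonneg fun i _ => ?_
        simp only [w, φ, ψ]
        rw [f1]
        have : 0 ≤ exp (s / t * (η x - K)) * (s / t) * (fderiv ℝ η x (EuclideanSpace.single i 1)) ^ 2 := by
          positivity
        linarith)
      (fun x hx => hq0 (t, x) ⟨ht', subset_closure hx⟩)
      (fun x hx => hqd (t, x) ⟨ht', hx⟩) (fun x hx => hqdd (t, x) ⟨ht', hx⟩)
      (hq2.comp (f := fun x : EuclideanSpace ℝ (Fin N) => (t, x)) (by fun_prop) (fun x hx => ⟨ht', hx⟩))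
    have hfe : ∀ x, Lw (t, x) = spaceLaplacian (fun x => w (t, x)) x := fun x => (f2 x).symm
    simp only [hfe]
    exact this
  -- combine
  let Φ : ℝ × EuclideanSpace ℝ (Fin N) → ℝ := fun p => (s / p.1) ^ 2 * exp (s / p.1 * (η p.2 - K)) * q p
  have hΦc : ContinuousOn Φ KK := ((hPc.pow 2).mul hφc).mul hqc
  have iΦ : IntegrableOn Φ S := aux_intOn hKc hSK hΦc
  set S' : Set (ℝ × EuclideanSpace ℝ (Fin N)) := Ioc t1 t2 ×ˢ ω with hS'
  have hS'm : MeasurableSet S' := measurableSet_Ioc.prod hωo.measurableSet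
  have hS'S : S' ⊆ S := prod_mono subset_rfl hωΩ
  have iΦ' : IntegrableOn (S'.indicator Φ) S := iΦ.indicator hS'm
  have hind : ∫ p in S, S'.indicator Φ p = ∫ p in S', Φ p := by
    rw [setIntegral_indicator hS'm, inter_eq_self_of_subset_right hS'S]
  have j1 : IntegrableOn (fun p => q p * Lw p) S := aux_intOn hKc hSK (hqc.mul hLwc)
  have j2 : IntegrableOn (fun p => w p * Q p) S := aux_intOn hKc hSK (hwc.mul hQc)
  have j3 : IntegrableOn (fun p => qt p * w p + q p * wt p) S :=
    aux_intOn hKc hSK ((hqtc.mul hwc).add (hqc.mul hwtc))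
  have hpt : ∫ p in S, (c0 / 2 * Φ p - c0 * S'.indicator Φ p) ≤
      ∫ p in S, (q p * Lw p - w p * Q p - (qt p * w p + q p * wt p)) := by
    refine setIntegral_mono_on_ae ((iΦ.const_mul _).sub (iΦ'.const_mul _)) ((j1.sub j2).sub j3) hSm ?_
    filter_upwards [hae] with p hp hpS
    have hpK := hSK hpS
    specialize hp hpS
    change qt p + Q p ≤ A * q p at hp
    have hp1 : 0 < p.1 := ht1.trans hpS.1.1
    have hP : 0 < s / p.1 := div_pos hs hp1
    have hq := hq0 p hpK
    have hw := hw0 p hpK (hηpos _ hpS.2).le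
    have hφ : 0 < φ p := exp_pos _
    have hψ : 0 < ψ p := exp_pos _
    have hηp := hηpos _ hpS.2
    -- wt bound
    have g1 : wt p ≤ (s / p.1) ^ 2 * φ p * (c0 / 6) := by
      have : wt p ≤ s / p.1 ^ 2 * (K * φ p) := by
        refine mul_le_mul_of_nonneg_left ?_ (by positivity)
        nlinarith
      refine this.trans ?_
      have e : (s / p.1) ^ 2 * φ p * (c0 / 6) = s / p.1 ^ 2 * (c0 * s / 6 * φ p) := by
        field_simp
      rw [e]
      refine mul_le_mul_of_nonneg_left ?_ (by positivity)
      exact mul_le_mul_of_nonneg_right (by linarith) hφ.le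
    have g2 : A * w p ≤ (s / p.1) ^ 2 * φ p * (c0 / 6) := by
      have h1 : A * w p ≤ A * φ p := mul_le_mul_of_nonneg_left (hww p) hA
      have h2 := mul_le_mul_of_nonneg_right (hs3 p.1 hpK.1) hφ.le
      linarith
    have g3 : φ p * (s / p.1 * (-spaceLaplacian η p.2)) ≤ (s / p.1) ^ 2 * φ p * (c0 / 6) := by
      have h1 : -spaceLaplacian η p.2 ≤ c0 * (s / p.1) / 6 := by
        have := neg_abs_le (spaceLaplacian η p.2)
        linarith [hL _ hpS.2, hs2 p.1 hpK.1]
      have h2 := mul_le_mul_of_nonneg_left h1 (mul_pos hφ hP).le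
      linarith
    have g4 : Lw p = (s / p.1) ^ 2 * φ p * G p.2 - φ p * (s / p.1 * (-spaceLaplacian η p.2)) := by
      simp only [Lw]; ring
    have g5 : (s / p.1) ^ 2 * φ p * (G p.2 - c0 / 2) ≤ Lw p - wt p - A * w p := by linarith
    have g6 : q p * ((s / p.1) ^ 2 * φ p * (G p.2 - c0 / 2)) ≤
        q p * Lw p - w p * Q p - (qt p * w p + q p * wt p) := by
      have h1 := mul_le_mul_of_nonneg_left g5 hq
      have h2 := mul_le_mul_of_nonneg_left hp hw
      linarith
    refine le_trans ?_ g6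
    have hΦe : Φ p = q p * ((s / p.1) ^ 2 * φ p) := by simp only [Φ, φ]; ring
    have hΦ0 : 0 ≤ q p * ((s / p.1) ^ 2 * φ p) := by positivity
    by_cases hpω : p.2 ∈ ω
    · rw [indicator_of_mem (show p ∈ S' from ⟨hpS.1, hpω⟩), hΦe]
      nlinarith [mul_nonneg hΦ0 (hG0 p.2)]
    · rw [indicator_of_notMem (fun h => hpω h.2), hΦe]
      have : c0 ≤ G p.2 := hc p.2 hpS.2 hpω
      nlinarith [mul_nonneg hΦ0 (sub_nonneg.2 this)]
  have k1 : ∫ p in S, (c0 / 2 * Φ p - c0 * S'.indicator Φ p)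
      = c0 / 2 * (∫ p in S, Φ p) - c0 * ∫ p in S', Φ p := by
    rw [integral_sub (iΦ.const_mul _) (iΦ'.const_mul _), integral_const_mul, integral_const_mul, hind]
  have k2 : ∫ p in S, (q p * Lw p - w p * Q p - (qt p * w p + q p * wt p))
      = (∫ p in S, q p * Lw p) - (∫ p in S, w p * Q p) - ∫ p in S, (qt p * w p + q p * wt p) := by
    rw [integral_sub (f := fun p => q p * Lw p - w p * Q p) (j1.sub j2) j3, integral_sub j1 j2]
  rw [k1, k2] at hpt
  linarith

lemma aux_lapc {N : ℕ} {η : EuclideanSpace ℝ (Fin N) → ℝ} (hη : ContDiff ℝ 2 η) :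
    Continuous (spaceLaplacian η) := by
  have hη1 : ContDiff ℝ 1 (fderiv ℝ η) := hη.fderiv_right (by norm_num)
  have hηdd : Differentiable ℝ (fderiv ℝ η) := hη1.differentiable (by norm_num)
  have hη2 : Continuous (fderiv ℝ (fderiv ℝ η)) := hη1.continuous_fderiv (by norm_num)
  have hLη : ∀ x, spaceLaplacian η x = ∑ i : Fin N, fderiv ℝ (fderiv ℝ η) x
      (EuclideanSpace.single i 1) (EuclideanSpace.single i 1) := by
    intro x
    unfold spaceLaplacian
    refine Finset.sum_congr rfl fun i _ => ?_
    rw [((hηdd x).hasFDerivAt.clm_apply (hasFDerivAt_const _ x)).fderiv]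
    simp
  rw [funext hLη]; fun_prop

lemma aux_grad {N : ℕ} (η : EuclideanSpace ℝ (Fin N) → ℝ) (x : EuclideanSpace ℝ (Fin N)) :
    ∑ i, (fderiv ℝ η x (EuclideanSpace.single i 1)) ^ 2 = ‖gradient η x‖ ^ 2 := by
  rw [EuclideanSpace.norm_sq_eq]
  refine Finset.sum_congr rfl fun i _ => ?_
  rw [← inner_gradient_left, EuclideanSpace.inner_single_right]
  simp

lemma aux_ae {X : Type*} [MeasurableSpace X] {μ : Measure X} {a : X → ℝ} {B : ℝ}
    (h : ∀ᵐ x ∂μ, |a x| ≤ B) : ∀ᵐ x ∂μ, |a x| ≤ (eLpNorm a ⊤ μ).toReal := by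
  rw [eLpNorm_exponent_top]
  have hlt : eLpNormEssSup a μ < ⊤ := eLpNormEssSup_lt_top_of_ae_bound (C := B) h
  filter_upwards [ae_le_eLpNormEssSup (f := a) (μ := μ)] with x hx
  have := ENNReal.toReal_mono hlt.ne hx
  simpa using this

end Aux

open Filter Topology in
set_option maxHeartbeats 2000000 in
theorem observability_L1_L1
    (N : ℕ) (hN : 1 ≤ N)
    (Ω ω₀ ω : Set (EuclideanSpace ℝ (Fin N)))
    (hΩo : IsOpen Ω) (hΩb : Bornology.IsBounded Ω) (hΩc : IsConnected Ω)
    (hω₀o : IsOpen ω₀) (hω₀ne : ω₀.Nonempty) (hωo : IsOpen ω) (hωne : ω.Nonempty)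
    (hω₀ω : closure ω₀ ⊆ ω) (hωΩ : ω ⊆ Ω)
    (η : EuclideanSpace ℝ (Fin N) → ℝ) (hη : ContDiff ℝ 2 η)
    (hηpos : ∀ x ∈ Ω, 0 < η x) (hηbd : ∀ x ∈ frontier Ω, η x = 0)
    (hηgrad : ∀ x ∈ closure (Ω \ ω₀), 0 < ‖gradient η x‖) :
    ∃ C > (0:ℝ),
      ∀ T : ℝ, 0 < T →
      ∀ a : ℝ × EuclideanSpace ℝ (Fin N) → ℝ, Measurable a →
      (∃ B : ℝ, ∀ p ∈ Set.Ioo (0:ℝ) T ×ˢ Ω, |a p| ≤ B) →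
      ∀ q qt : ℝ × EuclideanSpace ℝ (Fin N) → ℝ,
        ContinuousOn q (Set.Icc 0 T ×ˢ closure Ω) →
        (∀ p ∈ Set.Icc 0 T ×ˢ closure Ω, 0 ≤ q p) →
        (∀ p ∈ Set.Ioo 0 T ×ˢ closure Ω,
          HasDerivAt (fun τ => q (τ, p.2)) (qt p) p.1) →
        ContinuousOn qt (Set.Ioo 0 T ×ˢ closure Ω) →
        (∀ p ∈ Set.Ioo 0 T ×ˢ closure Ω,
          DifferentiableAt ℝ (fun z => q (p.1, z)) p.2) →
        (∀ p ∈ Set.Ioo 0 T ×ˢ closure Ω,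
          DifferentiableAt ℝ (fun y => fderiv ℝ (fun z => q (p.1, z)) y) p.2) →
        ContinuousOn (fun p : ℝ × EuclideanSpace ℝ (Fin N) =>
          fderiv ℝ (fun z => q (p.1, z)) p.2) (Set.Ioo 0 T ×ˢ closure Ω) →
        ContinuousOn (fun p : ℝ × EuclideanSpace ℝ (Fin N) =>
          fderiv ℝ (fun y => fderiv ℝ (fun z => q (p.1, z)) y) p.2)
          (Set.Ioo 0 T ×ˢ closure Ω) →
        (∀ t ∈ Set.Ioo (0:ℝ) T, ∀ x ∈ Ω,
          -qt (t, x) - spaceLaplacian (fun z => q (t, z)) x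
            + a (t, x) * q (t, x) = 0) →
        (∀ t ∈ Set.Ioo (0:ℝ) T, ∀ x ∈ frontier Ω,
          ⟪gradient (fun z => q (t, z)) x, gradient η x⟫ = 0) →
        (∫ t in Set.Ioo (T/4) (3*T/4), ∫ x in Ω, q (t, x))
          ≤ Real.exp (C * (1 + 1/T + Real.sqrt (eLpNorm a ⊤ (volume.restrict (Set.Ioo (0:ℝ) T ×ˢ Ω))).toReal)) *
            ∫ t in Set.Ioo (0:ℝ) T, ∫ x in ω, q (t, x) := by
  have hcl : IsCompact (closure Ω) := hΩb.isCompact_closure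
  have hηc : Continuous η := hη.continuous
  have hη1c : Continuous (fderiv ℝ η) := hη.continuous_fderiv (by norm_num)
  obtain ⟨M, hM⟩ := hcl.exists_bound_of_continuousOn hηc.continuousOn
  obtain ⟨L, hL⟩ := hcl.exists_bound_of_continuousOn (aux_lapc hη).continuousOn
  have hGc : Continuous fun x => ∑ i, (fderiv ℝ η x (EuclideanSpace.single i 1)) ^ 2 := by fun_prop
  obtain ⟨c0, hc0, hc⟩ := (hcl.of_isClosed_subset (isClosed_closure (s := Ω \ ω₀))
    (closure_mono sdiff_subset)).exists_forall_le' hGc.continuousOn (a := 0) (by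
      intro x hx
      rw [aux_grad]
      exact pow_pos (hηgrad x hx) 2)
  obtain ⟨x0, hx0⟩ := hΩc.nonempty
  have hM0 : 0 ≤ M := (norm_nonneg _).trans (hM x0 (subset_closure hx0))
  have hL0 : 0 ≤ L := (norm_nonneg _).trans (hL x0 (subset_closure hx0))
  set K := M + 1 with hK
  have hK0 : 0 ≤ K := by positivity
  have hK1 : ∀ x ∈ Ω, η x + 1 ≤ K := fun x hx => by
    have := (le_abs_self _).trans (hM x (subset_closure hx))
    linarith
  set C1 := 1 + 6 * K / c0 + 6 * L / c0 + 6 / c0 with hC1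
  have u1 : 0 ≤ 6 * K / c0 := by positivity
  have u2 : 0 ≤ 6 * L / c0 := by positivity
  have u3 : 0 ≤ 6 / c0 := by positivity
  have hC11 : 1 ≤ C1 := by linarith
  have v1 : 6 * K ≤ c0 * C1 := by
    rw [← div_le_iff₀' hc0]; linarith
  have v2 : 6 * L ≤ c0 * C1 := by
    rw [← div_le_iff₀' hc0]; linarith
  have v3 : 6 ≤ c0 * C1 := by
    rw [← div_le_iff₀' hc0]; linarith
  refine ⟨4 * K * C1 + 2, by positivity, ?_⟩
  intro T hT a ham hab q qt hqc hq0 hqt hqtc hqd hqdd hq1 hq2 hpde hneu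
  set A := (eLpNorm a ⊤ (volume.restrict (Set.Ioo (0:ℝ) T ×ˢ Ω))).toReal with hA
  have hA0 : 0 ≤ A := ENNReal.toReal_nonneg
  have hm : MeasurableSet (Set.Ioo (0:ℝ) T ×ˢ Ω) := measurableSet_Ioo.prod hΩo.measurableSet
  have hae : ∀ᵐ p : ℝ × EuclideanSpace ℝ (Fin N), p ∈ Ioo (0:ℝ) T ×ˢ Ω → |a p| ≤ A := by
    rw [← ae_restrict_iff' hm]
    obtain ⟨B, hB⟩ := hab
    refine aux_ae (B := B) ?_
    rw [ae_restrict_iff' hm]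
    exact Eventually.of_forall hB
  set s := C1 * (1 + T + T * √A) with hs
  have hsA := Real.sqrt_nonneg A
  have hs0 : 0 < s := by positivity
  have hsC : C1 ≤ s := by
    rw [hs]; nlinarith [mul_nonneg hT.le hsA]
  -- lower bound of s / t
  have hst : ∀ t, 0 < t → t ≤ T → C1 * (1 + √A) ≤ s / t := by
    intro t ht htT
    rw [le_div_iff₀ ht, hs]
    have : (1 + √A) * t ≤ 1 + T + T * √A := by
      nlinarith [mul_le_mul_of_nonneg_left htT hsA]
    nlinarith
  set J := ∫ p in Ioo (T/4) (3*T/4) ×ˢ Ω, q p with hJ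
  set W := ∫ p in Ioo (0:ℝ) T ×ˢ ω, q p with hW
  have hKc : IsCompact (Icc 0 T ×ˢ closure Ω) := isCompact_Icc.prod hcl
  have iqJ : IntegrableOn q (Ioo (T/4) (3*T/4) ×ˢ Ω) := aux_intOn hKc
    (prod_mono (fun t ht => ⟨by linarith [ht.1], by linarith [ht.2]⟩) subset_closure) hqc
  have iqW : IntegrableOn q (Ioo (0:ℝ) T ×ˢ ω) := aux_intOn hKc
    (prod_mono Ioo_subset_Icc_self (hωΩ.trans subset_closure)) hqc
  obtain ⟨Qm, hQm⟩ := hKc.exists_bound_of_continuousOn hqc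
  have hvol : volume Ω ≠ ⊤ := hΩb.measure_lt_top.ne
  set κ := exp (-(4 * (s / T) * K)) with hκ
  have main : ∀ t1, 0 < t1 → t1 < T / 4 →
      c0 / 2 * (κ * J) ≤ c0 * (2 * W) + Qm * volume.real Ω * exp (-(s / t1)) := by
    intro t1 ht1 ht1T
    set t2 := 3 * T / 4 with ht2
    have h12 : t1 ≤ t2 := by linarith
    have hsub : Icc t1 t2 ×ˢ closure Ω ⊆ Ioo 0 T ×ˢ closure Ω :=
      prod_mono (fun t ht => ⟨by linarith [ht.1], by linarith [ht.2]⟩) subset_rfl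
    have hsub' : Icc t1 t2 ×ˢ closure Ω ⊆ Icc 0 T ×ˢ closure Ω :=
      hsub.trans (prod_mono Ioo_subset_Icc_self subset_rfl)
    have hcomp : IsCompact (Icc t1 t2 ×ˢ closure Ω) := isCompact_Icc.prod hcl
    have hPge : ∀ t ∈ Icc t1 t2, C1 * (1 + √A) ≤ s / t := fun t ht =>
      hst t (ht1.trans_le ht.1) (by linarith [ht.2])
    have hCA : 0 ≤ C1 * √A := mul_nonneg (by linarith) hsA
    have hPge1 : ∀ t ∈ Icc t1 t2, C1 ≤ s / t := fun t ht => by linarith [hPge t ht]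
    have hPge2 : ∀ t ∈ Icc t1 t2, C1 * √A ≤ s / t := fun t ht => by linarith [hPge t ht]
    have est := aux_main (q := q) (qt := qt) (A := A) (s := s) (L := L) (c0 := c0) (K := K)
      (t1 := t1) (t2 := t2) hΩo hΩb hωo hωΩ hη hηpos hηbd hK1 hK0
      (fun x hx => hL x (subset_closure hx)) hc0
      (fun x hx hxω => hc x (subset_closure ⟨hx, fun h => hxω (hω₀ω (subset_closure h))⟩))
      ht1 h12 hs0 hA0
      (v1.trans (mul_le_mul_of_nonneg_left hsC hc0.le))
      (fun t ht => v2.trans (mul_le_mul_of_nonneg_left (hPge1 t ht) hc0.le))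
      (by
        intro t ht
        have h1 : C1 * √A ≤ s / t := hPge2 t ht
        have h2 : (C1 * √A) ^ 2 ≤ (s / t) ^ 2 := pow_le_pow_left₀ (by positivity) h1 2
        have h3 : (C1 * √A) ^ 2 = C1 ^ 2 * A := by rw [mul_pow, Real.sq_sqrt hA0]
        have h4 : 6 ≤ c0 * C1 ^ 2 := by
          have := mul_le_mul_of_nonneg_right v3 (by linarith : 0 ≤ C1)
          linarith
        have h5 := mul_le_mul_of_nonneg_left h2 hc0.le
        rw [h3] at h5
        have h6 := mul_le_mul_of_nonneg_right h4 hA0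
        linarith)
      (hqc.mono hsub') (fun p hp => hq0 p (hsub' hp)) (fun p hp => hqt p (hsub hp))
      (hqtc.mono hsub) (fun p hp => hqd p (hsub hp)) (fun p hp => hqdd p (hsub hp))
      (hq2.mono hsub)
      (by
        filter_upwards [hae] with p hp hpS
        have ht : p.1 ∈ Ioo 0 T := ⟨ht1.trans hpS.1.1, by linarith [hpS.1.2]⟩
        have h1 := hpde p.1 ht p.2 hpS.2
        have h2 := (le_abs_self _).trans (hp ⟨ht, hpS.2⟩)
        have h3 := hq0 p ⟨Ioo_subset_Icc_self ht, subset_closure hpS.2⟩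
        have h4 := mul_le_mul_of_nonneg_right h2 h3
        simp only [Prod.mk.eta] at h1
        linarith)
    have hfc : ContinuousOn (fun p : ℝ × EuclideanSpace ℝ (Fin N) =>
        (s / p.1) ^ 2 * exp (s / p.1 * (η p.2 - K)) * q p) (Icc t1 t2 ×ˢ closure Ω) := by
      have hPc : ContinuousOn (fun p : ℝ × EuclideanSpace ℝ (Fin N) => s / p.1)
          (Icc t1 t2 ×ˢ closure Ω) :=
        continuousOn_const.div continuousOn_fst (fun p hp => (ht1.trans_le hp.1.1).ne')
      exact ((hPc.pow 2).mul (hPc.mul ((hηc.comp continuous_snd).continuousOn.sub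
        continuousOn_const)).rexp).mul (hqc.mono hsub')
    have ifS : IntegrableOn (fun p : ℝ × EuclideanSpace ℝ (Fin N) =>
        (s / p.1) ^ 2 * exp (s / p.1 * (η p.2 - K)) * q p) (Ioc t1 t2 ×ˢ Ω) :=
      aux_intOn hcomp (prod_mono Ioc_subset_Icc_self subset_closure) hfc
    have e1 : κ * J ≤ ∫ p in Ioc t1 t2 ×ˢ Ω, (s / p.1) ^ 2 * exp (s / p.1 * (η p.2 - K)) * q p := by
      have hss : Ioo (T/4) (3*T/4) ×ˢ Ω ⊆ Ioc t1 t2 ×ˢ Ω :=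
        prod_mono (fun t ht => ⟨by linarith [ht.1], ht.2.le⟩) subset_rfl
      calc κ * J = ∫ p in Ioo (T/4) (3*T/4) ×ˢ Ω, κ * q p := by rw [integral_const_mul]
        _ ≤ ∫ p in Ioo (T/4) (3*T/4) ×ˢ Ω, (s / p.1) ^ 2 * exp (s / p.1 * (η p.2 - K)) * q p := by
          refine setIntegral_mono_on (iqJ.const_mul _) (ifS.mono_set hss)
            (measurableSet_Ioo.prod hΩo.measurableSet) ?_
          intro p hp
          have hpos : 0 < p.1 := by linarith [hp.1.1]
          refine mul_le_mul_of_nonneg_right ?_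
            (hq0 p ⟨⟨hpos.le, by linarith [hp.1.2]⟩, subset_closure hp.2⟩)
          have h1 : 1 ≤ s / p.1 := by
            have := hst p.1 hpos (by linarith [hp.1.2])
            nlinarith
          have h2 : s / p.1 ≤ 4 * (s / T) := by
            rw [div_le_iff₀ hpos]
            have : 4 * (s / T) * p.1 = s * (4 * p.1 / T) := by ring
            rw [this]
            have h3 : 1 ≤ 4 * p.1 / T := by
              rw [le_div_iff₀ hT]; linarith [hp.1.1]
            nlinarith
          have h3 : κ ≤ exp (s / p.1 * (η p.2 - K)) := by
            rw [hκ, exp_le_exp]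
            have := hηpos p.2 hp.2
            nlinarith [mul_le_mul_of_nonneg_right h2 hK0]
          have h4 : 1 ≤ (s / p.1) ^ 2 := one_le_pow₀ h1
          have h5 := exp_pos (s / p.1 * (η p.2 - K))
          nlinarith
        _ ≤ _ := by
          refine setIntegral_mono_set ifS ?_ (HasSubset.Subset.eventuallyLE hss)
          filter_upwards [ae_restrict_mem (measurableSet_Ioc.prod hΩo.measurableSet)] with p hp
          have := hq0 p (hsub' ⟨Ioc_subset_Icc_self hp.1, subset_closure hp.2⟩)
          simp only [Pi.zero_apply]
          positivity
    have e2 : ∫ p in Ioc t1 t2 ×ˢ ω, (s / p.1) ^ 2 * exp (s / p.1 * (η p.2 - K)) * q p ≤ 2 * W := by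
      have hss : Ioc t1 t2 ×ˢ ω ⊆ Ioo 0 T ×ˢ ω :=
        prod_mono (fun t ht => ⟨by linarith [ht.1], by linarith [ht.2]⟩) subset_rfl
      calc _ ≤ ∫ p in Ioc t1 t2 ×ˢ ω, 2 * q p := by
            refine setIntegral_mono_on (ifS.mono_set (prod_mono subset_rfl hωΩ))
              ((iqW.mono_set hss).const_mul _) (measurableSet_Ioc.prod hωo.measurableSet) ?_
            intro p hp
            have hpos : 0 < p.1 := ht1.trans hp.1.1
            refine mul_le_mul_of_nonneg_right ?_
              (hq0 p (hsub' ⟨Ioc_subset_Icc_self hp.1, subset_closure (hωΩ hp.2)⟩))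
            have hP : 0 < s / p.1 := by positivity
            have h1 : exp (s / p.1 * (η p.2 - K)) ≤ exp (-(s / p.1)) := by
              rw [exp_le_exp]
              nlinarith [hK1 p.2 (hωΩ hp.2)]
            have h2 := Real.quadratic_le_exp_of_nonneg hP.le
            have h3 : (s / p.1) ^ 2 ≤ 2 * exp (s / p.1) := by linarith
            calc (s / p.1) ^ 2 * exp (s / p.1 * (η p.2 - K))
                ≤ (2 * exp (s / p.1)) * exp (-(s / p.1)) := by gcongr
              _ = 2 := by rw [mul_assoc, ← exp_add]; simp
        _ = 2 * ∫ p in Ioc t1 t2 ×ˢ ω, q p := by rw [integral_const_mul]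
        _ ≤ 2 * W := by
          refine mul_le_mul_of_nonneg_left ?_ (by norm_num)
          refine setIntegral_mono_set iqW ?_ (HasSubset.Subset.eventuallyLE hss)
          filter_upwards [ae_restrict_mem (measurableSet_Ioo.prod hωo.measurableSet)] with p hp
          exact hq0 p ⟨Ioo_subset_Icc_self hp.1, subset_closure (hωΩ hp.2)⟩
    have e3 : ∫ x in Ω, q (t1, x) * exp (-(s / t1)) ≤ Qm * volume.real Ω * exp (-(s / t1)) := by
      rw [integral_mul_const]
      refine mul_le_mul_of_nonneg_right ?_ (exp_pos _).le
      have ht1m : t1 ∈ Icc 0 T := ⟨ht1.le, by linarith⟩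
      refine (le_abs_self _).trans ?_
      rw [← Real.norm_eq_abs]
      exact norm_setIntegral_le_of_norm_le_const hΩb.measure_lt_top
        (fun x hx => hQm (t1, x) ⟨ht1m, subset_closure hx⟩)
    have f1 := mul_le_mul_of_nonneg_left e1 (by positivity : 0 ≤ c0 / 2)
    have f2 := mul_le_mul_of_nonneg_left e2 hc0.le
    linarith
  have hlim : Tendsto (fun t1 : ℝ => c0 * (2 * W) + Qm * volume.real Ω * exp (-(s / t1))) (𝓝[>] 0)
      (𝓝 (c0 * (2 * W) + Qm * volume.real Ω * 0)) := by
    refine tendsto_const_nhds.add (Tendsto.const_mul _ ?_)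
    refine Real.tendsto_exp_neg_atTop_nhds_zero.comp ?_
    exact tendsto_inv_nhdsGT_zero.const_mul_atTop hs0
  have hfin : c0 / 2 * (κ * J) ≤ c0 * (2 * W) + Qm * volume.real Ω * 0 := by
    refine ge_of_tendsto hlim ?_
    filter_upwards [Ioo_mem_nhdsGT (show (0:ℝ) < T / 4 by positivity)] with t1 ht
    exact main t1 ht.1 ht.2
  have hW0 : 0 ≤ W := by
    refine setIntegral_nonneg (measurableSet_Ioo.prod hωo.measurableSet) fun p hp => ?_
    exact hq0 p ⟨Ioo_subset_Icc_self hp.1, subset_closure (hωΩ hp.2)⟩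
  have hJW : κ * J ≤ 4 * W := by
    have : c0 * (κ * J) ≤ c0 * (4 * W) := by linarith
    exact le_of_mul_le_mul_left this hc0
  have hJ' : (∫ t in Set.Ioo (T/4) (3*T/4), ∫ x in Ω, q (t, x)) = J := by
    rw [hJ, Measure.volume_eq_prod, setIntegral_prod _ iqJ]
  have hW' : (∫ t in Set.Ioo (0:ℝ) T, ∫ x in ω, q (t, x)) = W := by
    rw [hW, Measure.volume_eq_prod, setIntegral_prod _ iqW]
  rw [hJ', hW']
  have hX : s / T = C1 * (1 + 1 / T + √A) := by
    rw [hs]; field_simp; ring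
  have hJ2 : J ≤ exp (4 * (s / T) * K) * (4 * W) := by
    have := mul_le_mul_of_nonneg_left hJW (exp_pos (4 * (s / T) * K)).le
    rw [← mul_assoc, hκ, ← exp_add] at this
    simpa using this
  refine hJ2.trans ?_
  rw [← mul_assoc]
  refine mul_le_mul_of_nonneg_right ?_ hW0
  have h4 : (4:ℝ) ≤ exp (2 * (1 + 1 / T + √A)) := by
    have h1 : (2:ℝ) ≤ exp 1 := by linarith [add_one_le_exp (1:ℝ)]
    have h2 : exp 2 = exp 1 * exp 1 := by rw [← exp_add]; norm_num
    have h3 : exp 2 ≤ exp (2 * (1 + 1 / T + √A)) := by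
      rw [exp_le_exp]
      have : 0 < 1 / T := by positivity
      linarith
    nlinarith
  calc exp (4 * (s / T) * K) * 4 ≤ exp (4 * (s / T) * K) * exp (2 * (1 + 1 / T + √A)) :=
        mul_le_mul_of_nonneg_left h4 (exp_pos _).le
    _ = _ := by
      rw [← exp_add, hX]
      congr 1
      ring
end
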